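/- arXiv:1801.08229 — 3 statements merged into one kernel-verified Lean document; each statement's English description precedes it below -/
import Mathlib

section
/- There exists a constant C > 0 depending only on n such that, for every abstract Monge–Ampère pairing setup (W, B, 𝟙, F) as in the context, every choice of reference element φ_ref ∈ F, and all ψ₁, ψ₂ ∈ F and φ₁, …, φₙ, φ'₁, …, φ'ₙ ∈ F: |B(ψ₁−ψ₂, φ'₁, …, φ'ₙ) − B(ψ₁−ψ₂, φ₁, …, φₙ)| ≤ C · I(ψ₁, ψ₂)^{1/2ⁿ} · (max_{1≤p≤n} I(φ_p, φ'_p))^{1/2ⁿ} · M^{1 − 1/2^{n−1}}, where M := max{J(ψ₁), J(ψ₂), max_p J(φ_p), max_p J(φ'_p)}. -/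
open Finset

/-- Abstract Monge–Ampère pairing setup with `n = m + 1`: a symmetric multilinear
form `B` on `W^(n+1) = W^(m+2)`, a unit element `one`, and a nonempty convex set
`F ⊆ W`, satisfying (i) normalization `B(𝟙, φ₁, …, φₙ) = 1`, (ii) integration by
parts `B(u, 𝟙, g₂, …, gₙ) = 0` for `u ∈ W₀` and `gᵢ ∈ W' = span (F ∪ {𝟙})`, and
(iii) the Cauchy–Schwarz / local Hodge index inequality
`B(u, u, φ₁, …, φ_{n-1}) ≤ 0` for `u ∈ W₀`. -/
structure MASetup (m : ℕ) (W : Type*) [AddCommGroup W] [Module ℝ W] where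
  B : MultilinearMap ℝ (fun _ : Fin (m + 2) => W) ℝ
  symm : ∀ (v : Fin (m + 2) → W) (σ : Equiv.Perm (Fin (m + 2))), B (v ∘ σ) = B v
  one : W
  F : Set W
  Fne : F.Nonempty
  Fconv : Convex ℝ F
  unital : ∀ g : Fin (m + 1) → W, (∀ i, g i ∈ F) → B (Fin.cons one g) = 1
  parts : ∀ u ∈ Submodule.span ℝ ({x | ∃ φ ∈ F, ∃ ψ ∈ F, x = φ - ψ} ∪ {one}),
      ∀ g : Fin m → W, (∀ i, g i ∈ Submodule.span ℝ (F ∪ {one})) →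
        B (Fin.cons u (Fin.cons one g)) = 0
  hodge : ∀ u ∈ Submodule.span ℝ ({x | ∃ φ ∈ F, ∃ ψ ∈ F, x = φ - ψ} ∪ {one}),
      ∀ g : Fin m → W, (∀ i, g i ∈ F) → B (Fin.cons u (Fin.cons u g)) ≤ 0

namespace MASetup

variable {m : ℕ} {W : Type*} [AddCommGroup W] [Module ℝ W]

/-- The vector with `j` copies of `φ` followed by copies of `ψ`. -/
def mixVec (φ ψ : W) (j : ℕ) {k : ℕ} : Fin k → W := fun i => if (i : ℕ) < j then φ else ψ

/-- The linear span `W₀` of the differences of elements of `F` together with `one`. -/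
def W0 (S : MASetup m W) : Submodule ℝ W :=
  Submodule.span ℝ ({x | ∃ φ ∈ S.F, ∃ ψ ∈ S.F, x = φ - ψ} ∪ {S.one})

/-- The Monge–Ampère energy
`E(φ, ψ) = (n+1)⁻¹ ∑_{j=0}^{n} B(φ-ψ, φ, …, φ, ψ, …, ψ)` with `j` copies of `φ`
and `n - j` copies of `ψ` among the last `n` arguments. -/
noncomputable def energy (S : MASetup m W) (φ ψ : W) : ℝ :=
  ((m : ℝ) + 2)⁻¹ * ∑ j ∈ Finset.range (m + 2), S.B (Fin.cons (φ - ψ) (mixVec φ ψ j))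

/-- The functional `I(φ, ψ) = B(φ-ψ, ψ, …, ψ) - B(φ-ψ, φ, …, φ)`. -/
noncomputable def Ifun (S : MASetup m W) (φ ψ : W) : ℝ :=
  S.B (Fin.cons (φ - ψ) fun _ => ψ) - S.B (Fin.cons (φ - ψ) fun _ => φ)

/-- The functional `J_ψ(φ) = B(φ-ψ, ψ, …, ψ) - E(φ, ψ)`. -/
noncomputable def Jfun (S : MASetup m W) (ψ φ : W) : ℝ :=
  S.B (Fin.cons (φ - ψ) fun _ => ψ) - S.energy φ ψ

end MASetup

/-!
For `g₁, …, g_m ∈ F` the form `(u, v) ↦ -B(u, v, g₁, …, g_m)` is positive semidefinite on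
differences of points of `F`, so telescoping the two tuples `φ` and `φ'` and applying
Cauchy–Schwarz reduces everything to its values `Q_g` at `u = ψ₁ - ψ₂`. If all entries of `g` are
`ψ₁` or `ψ₂`, then `Q_g ≤ I(ψ₁, ψ₂)` by monotonicity. Replacing one entry of such a tuple by an
arbitrary point costs one more application of Cauchy–Schwarz, that is, a square root, together with
an upper bound `X` for all the forms on differences of points; after `m` replacements
`Q_g ^ 2 ^ m ≤ I(ψ₁, ψ₂) (9 X) ^ (2 ^ m - 1)`.

To bound `X`, restrict to a finite subset of `F` and let `X₀` be the largest value of any of the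
forms at `w - φ_ref`. Then `4 X₀` is an admissible `X`, and the inequality for `ψ₂ = φ_ref` at a
maximizer has `X₀` on both sides, so that it improves itself to
`X₀ ≤ 36 ^ (2 ^ m - 1) max I(w, φ_ref)`. Since `I ≤ (m + 2) J`, this is controlled by the
sublevel set of `J` on which all the given points lie.
-/

lemma pow_two_mul_le_of_sq_le {N : ℕ} {x y a b : ℝ} (ha : 0 ≤ a)
    (hxy : x ^ 2 ≤ a * y) (hyb : y ^ N ≤ b * a ^ (N - 1)) :
    x ^ (2 * N) ≤ b * a ^ (2 * N - 1) :=
  calc x ^ (2 * N) = (x ^ 2) ^ N := pow_mul _ _ _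
    _ ≤ (a * y) ^ N := by gcongr
    _ = a ^ N * y ^ N := mul_pow _ _ _
    _ ≤ a ^ N * (b * a ^ (N - 1)) := by gcongr
    _ = b * a ^ (2 * N - 1) := by
      rw [mul_left_comm, ← pow_add]
      congr 2
      omega

lemma le_pow_mul_of_pow_le {N : ℕ} {x b c : ℝ} (hN : N ≠ 0) (hx : 0 ≤ x) (hb : 0 ≤ b)
    (hc : 0 ≤ c) (h : x ^ N ≤ b * (c * x) ^ (N - 1)) : x ≤ c ^ (N - 1) * b := by
  rcases hx.eq_or_lt with rfl | hx
  · positivity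
  refine le_of_mul_le_mul_right ?_ (pow_pos hx (N - 1))
  calc x * x ^ (N - 1) = x ^ N := mul_pow_sub_one hN x
    _ ≤ b * (c * x) ^ (N - 1) := h
    _ = c ^ (N - 1) * b * x ^ (N - 1) := by rw [mul_pow]; ring

lemma le_rpow_mul_rpow_of_pow_le {N : ℕ} {x a b : ℝ} (hN : N ≠ 0) (hx : 0 ≤ x) (ha : 0 ≤ a)
    (hb : 0 ≤ b) (h : x ^ N ≤ a * b ^ (N - 1)) :
    x ≤ a ^ ((1 : ℝ) / N) * b ^ (1 - (1 : ℝ) / N) := by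
  have hexp : (1 : ℝ) - 1 / N = (N - 1 : ℕ) * (1 / N) := by
    rw [Nat.cast_pred (Nat.pos_of_ne_zero hN)]
    field_simp
  rw [hexp, Real.rpow_mul hb, Real.rpow_natCast, ← Real.mul_rpow ha (by positivity)]
  calc x = (x ^ N) ^ ((1 : ℝ) / N) := by rw [one_div, Real.pow_rpow_inv_natCast hx hN]
    _ ≤ (a * b ^ (N - 1)) ^ ((1 : ℝ) / N) := by gcongr

section Forms

variable {m : ℕ} {W : Type*} [AddCommGroup W] [Module ℝ W]
  (B : MultilinearMap ℝ (fun _ : Fin (m + 2) => W) ℝ)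

/-- The bilinear form `(u, v) ↦ -B(u, v, g₁, …, g_m)`, the model of
`V⁻¹ ∫ du ∧ dᶜv ∧ ddᶜg₁ ∧ ⋯ ∧ ddᶜg_m`; the sign makes the Hodge index inequality say that it is
positive semidefinite. -/
def hodgeForm (g : Fin m → W) : LinearMap.BilinForm ℝ W :=
  LinearMap.mk₂ ℝ (fun u v => -B (Fin.cons u (Fin.cons v g)))
    (fun u u' v => by rw [B.cons_add, neg_add])
    (fun c u v => by rw [B.cons_smul, smul_neg])
    (fun u v v' => by
      have h := (B.curryLeft u).cons_add g v v'
      simp only [MultilinearMap.curryLeft_apply] at h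
      rw [h, neg_add])
    (fun c u v => by
      have h := (B.curryLeft u).cons_smul g c v
      simp only [MultilinearMap.curryLeft_apply] at h
      rw [h, smul_neg])

/-- The functional `E(φ, ψ)` of a bare multilinear form; for an `MASetup` it is
`MASetup.energy`. -/
noncomputable def pairingEnergy (φ ψ : W) : ℝ :=
  ((m : ℝ) + 2)⁻¹ * ∑ j ∈ range (m + 2), B (Fin.cons (φ - ψ) (MASetup.mixVec φ ψ j))

/-- The functional `I(φ, ψ)` of a bare multilinear form; for an `MASetup` it is
`MASetup.Ifun`. -/
def pairingI (φ ψ : W) : ℝ :=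
  B (Fin.cons (φ - ψ) fun _ => ψ) - B (Fin.cons (φ - ψ) fun _ => φ)

/-- The functional `J_ψ(φ)` of a bare multilinear form, with the reference point first; for an
`MASetup` it is `MASetup.Jfun`. -/
noncomputable def pairingJ (ψ φ : W) : ℝ :=
  B (Fin.cons (φ - ψ) fun _ => ψ) - pairingEnergy B φ ψ

variable {B}

lemma hodgeForm_apply (g : Fin m → W) (u v : W) :
    hodgeForm B g u v = -B (Fin.cons u (Fin.cons v g)) := rfl

lemma hodgeForm_update_sub (g : Fin m → W) (q : Fin m) (a b u v : W) :
    hodgeForm B (Function.update g q (a - b)) u v =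
      hodgeForm B (Function.update g q a) u v - hodgeForm B (Function.update g q b) u v := by
  simp only [hodgeForm_apply, Fin.cons_update, B.map_update_sub]
  ring

lemma pairingJ_self (ψ : W) : pairingJ B ψ ψ = 0 := by
  have map_zero_cons (v : Fin (m + 1) → W) : B (Fin.cons 0 v) = 0 := B.map_coord_zero 0 rfl
  simp only [pairingJ, pairingEnergy, sub_self, map_zero_cons, sum_const_zero, mul_zero]

lemma cons_comp_swap {α : Type*} {k : ℕ} (a : α) (h : Fin k → α) (q : Fin k) :
    (Fin.cons a h : Fin (k + 1) → α) ∘ Equiv.swap 0 q.succ =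
      Fin.cons (h q) (Function.update h q a) := by
  rw [Equiv.comp_swap_eq_update, Fin.cons_zero, Fin.cons_succ, ← Fin.cons_update,
    Fin.update_cons_zero]

section Symmetric

variable (hsymm : ∀ (v : Fin (m + 2) → W) (σ : Equiv.Perm (Fin (m + 2))), B (v ∘ σ) = B v)
include hsymm

lemma map_cons_comp_perm (u : W) (h : Fin (m + 1) → W) (σ : Equiv.Perm (Fin (m + 1))) :
    B (Fin.cons u (h ∘ σ)) = B (Fin.cons u h) := by
  rw [← hsymm (Fin.cons u h) (Equiv.Perm.decomposeFin.symm (0, σ))]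
  congr 1
  funext i
  cases i using Fin.cases <;> simp

lemma map_cons_update (u w : W) (h : Fin (m + 1) → W) (q : Fin (m + 1)) :
    B (Fin.cons u (Function.update h q w)) = -hodgeForm B (q.removeNth h) u w := by
  rw [hodgeForm_apply, neg_neg, ← map_cons_comp_perm hsymm u _ q.cycleRange.symm,
    ← Fin.insertNth_removeNth, Fin.insertNth_comp_cycleRange_symm]

lemma isSymm_hodgeForm (g : Fin m → W) : (hodgeForm B g).IsSymm := by
  refine ⟨fun u v => ?_⟩
  rw [hodgeForm_apply, hodgeForm_apply, ← hsymm _ (Equiv.swap 0 (Fin.succ 0)), cons_comp_swap,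
    Fin.cons_zero, Fin.update_cons_zero]

lemma hodgeForm_update_comm (g : Fin m → W) (q : Fin m) (a b u : W) :
    hodgeForm B (Function.update g q b) u a = hodgeForm B (Function.update g q a) u b := by
  rw [hodgeForm_apply, hodgeForm_apply,
    ← map_cons_comp_perm hsymm u _ (Equiv.swap 0 q.succ), cons_comp_swap,
    Function.update_self, Function.update_idem]

lemma map_cons_sub_map_cons (u : W) (a b : Fin (m + 1) → W) :
    B (Fin.cons u a) - B (Fin.cons u b) =
      -∑ p, hodgeForm B (p.removeNth fun j => if j < p then a j else b j) u (a p - b p) := by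
  have telescope := (B.curryLeft u).map_piecewise_sub_map_piecewise a b b univ
  simp only [piecewise_univ, mem_univ, if_true, MultilinearMap.curryLeft_apply] at telescope
  rw [telescope, ← sum_neg_distrib]
  refine sum_congr rfl fun p _ => ?_
  rw [← map_cons_update hsymm]
  congr 2
  funext j
  rcases eq_or_ne j p with rfl | hj
  · simp
  · simp [hj]

end Symmetric

end Forms

/-- Symmetric multilinear forms satisfying the Hodge index inequality on `F`, which is condition
(iii) of the abstract Monge–Ampère setup with `𝟙` removed from `W₀`. No convexity of `F` is
required, so the notion passes to arbitrary subsets of `F`. -/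
structure IsHodgePairing {m : ℕ} {W : Type*} [AddCommGroup W] [Module ℝ W]
    (B : MultilinearMap ℝ (fun _ : Fin (m + 2) => W) ℝ) (F : Set W) : Prop where
  symm : ∀ (v : Fin (m + 2) → W) (σ : Equiv.Perm (Fin (m + 2))), B (v ∘ σ) = B v
  hodge : ∀ u ∈ vectorSpan ℝ F, ∀ g : Fin m → W, (∀ i, g i ∈ F) →
    B (Fin.cons u (Fin.cons u g)) ≤ 0

lemma MASetup.isHodgePairing {m : ℕ} {W : Type*} [AddCommGroup W] [Module ℝ W]
    (S : MASetup m W) : IsHodgePairing S.B S.F where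
  symm := S.symm
  hodge u hu := S.hodge u <| by
    refine Submodule.span_mono ?_ hu
    rintro _ ⟨φ, hφ, ψ, hψ, rfl⟩
    exact Or.inl ⟨φ, hφ, ψ, hψ, rfl⟩

namespace IsHodgePairing

variable {m : ℕ} {W : Type*} [AddCommGroup W] [Module ℝ W]
  {B : MultilinearMap ℝ (fun _ : Fin (m + 2) => W) ℝ} {F G : Set W} {D M X : ℝ}
  {g : Fin m → W} {r u v w φ φ₁ φ₂ ψ ψ₁ ψ₂ : W}

lemma mono (hB : IsHodgePairing B F) (hGF : G ⊆ F) : IsHodgePairing B G where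
  symm := hB.symm
  hodge u hu g hg := hB.hodge u (vectorSpan_mono ℝ hGF hu) g fun i => hGF (hg i)

lemma sub_mem_vectorSpan (hφ : φ ∈ F) (hψ : ψ ∈ F) : φ - ψ ∈ vectorSpan ℝ F :=
  vsub_mem_vectorSpan ℝ hφ hψ

lemma hodgeForm_self_nonneg (hB : IsHodgePairing B F) (hg : ∀ i, g i ∈ F)
    (hu : u ∈ vectorSpan ℝ F) : 0 ≤ hodgeForm B g u u :=
  neg_nonneg.2 (hB.hodge u hu g hg)

lemma sq_hodgeForm_le (hB : IsHodgePairing B F) (hg : ∀ i, g i ∈ F)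
    (hu : u ∈ vectorSpan ℝ F) (hv : v ∈ vectorSpan ℝ F) :
    hodgeForm B g u v ^ 2 ≤ hodgeForm B g u u * hodgeForm B g v v :=
  ((hodgeForm B g).restrict (vectorSpan ℝ F)).apply_sq_le_of_symm
    (fun x => hB.hodgeForm_self_nonneg hg x.2)
    (LinearMap.BilinForm.isSymm_iff.1 ((isSymm_hodgeForm hB.symm g).restrict _)) ⟨u, hu⟩ ⟨v, hv⟩

lemma hodgeForm_sub_self_le (hB : IsHodgePairing B F) (hg : ∀ i, g i ∈ F)
    (hu : u ∈ vectorSpan ℝ F) (hv : v ∈ vectorSpan ℝ F) :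
    hodgeForm B g (u - v) (u - v) ≤ 2 * (hodgeForm B g u u + hodgeForm B g v v) := by
  have parallelogram : hodgeForm B g (u - v) (u - v) + hodgeForm B g (u + v) (u + v) =
      2 * (hodgeForm B g u u + hodgeForm B g v v) := by
    simp only [map_add, map_sub, LinearMap.add_apply, LinearMap.sub_apply]
    ring
  linarith [hB.hodgeForm_self_nonneg hg (add_mem hu hv)]

lemma hodgeForm_sub_self_le_four_mul (hB : IsHodgePairing B F) (hr : r ∈ F)
    (hX : ∀ w ∈ F, hodgeForm B g (w - r) (w - r) ≤ X) (hg : ∀ i, g i ∈ F) (hφ : φ ∈ F)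
    (hψ : ψ ∈ F) : hodgeForm B g (φ - ψ) (φ - ψ) ≤ 4 * X := by
  rw [← sub_sub_sub_cancel_right φ ψ r]
  linarith [hB.hodgeForm_sub_self_le hg (sub_mem_vectorSpan hφ hr) (sub_mem_vectorSpan hψ hr),
    hX φ hφ, hX ψ hψ]

lemma map_cons_le_map_cons (hB : IsHodgePairing B F) (hu : u ∈ vectorSpan ℝ F)
    {a b : Fin (m + 1) → W} (ha : ∀ i, a i ∈ F) (hb : ∀ i, b i ∈ F)
    (hab : ∀ i, ∃ c : ℝ, 0 ≤ c ∧ a i - b i = c • u) :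
    B (Fin.cons u a) ≤ B (Fin.cons u b) := by
  rw [← sub_nonpos, map_cons_sub_map_cons hB.symm, neg_nonpos]
  refine sum_nonneg fun p _ => ?_
  obtain ⟨c, hc, hpc⟩ := hab p
  rw [hpc, map_smul]
  refine smul_nonneg hc (hB.hodgeForm_self_nonneg (fun i => ?_) hu)
  rw [Fin.removeNth_apply]
  split_ifs
  exacts [ha _, hb _]

lemma map_cons_sub_mem_Icc (hB : IsHodgePairing B F) (hφ : φ ∈ F) (hψ : ψ ∈ F)
    {h : Fin (m + 1) → W} (hh : ∀ i, h i = φ ∨ h i = ψ) :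
    B (Fin.cons (φ - ψ) h) ∈
      Set.Icc (B (Fin.cons (φ - ψ) fun _ => φ)) (B (Fin.cons (φ - ψ) fun _ => ψ)) := by
  have hF (i) : h i ∈ F := by rcases hh i with hi | hi <;> rwa [hi]
  have hu := sub_mem_vectorSpan hφ hψ
  constructor
  · refine hB.map_cons_le_map_cons hu (fun _ => hφ) hF fun i => ?_
    rcases hh i with hi | hi
    · exact ⟨0, le_rfl, by rw [hi, sub_self, zero_smul]⟩
    · exact ⟨1, zero_le_one, by rw [hi, one_smul]⟩
  · refine hB.map_cons_le_map_cons hu hF (fun _ => hψ) fun i => ?_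
    rcases hh i with hi | hi
    · exact ⟨1, zero_le_one, by rw [hi, one_smul]⟩
    · exact ⟨0, le_rfl, by rw [hi, sub_self, zero_smul]⟩

lemma hodgeForm_sub_self_le_pairingI (hB : IsHodgePairing B F) (hφ : φ ∈ F) (hψ : ψ ∈ F)
    (hg : ∀ i, g i = φ ∨ g i = ψ) : hodgeForm B g (φ - ψ) (φ - ψ) ≤ pairingI B φ ψ := by
  have split_slot : hodgeForm B g (φ - ψ) (φ - ψ) =
      B (Fin.cons (φ - ψ) (Fin.cons ψ g)) - B (Fin.cons (φ - ψ) (Fin.cons φ g)) := by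
    rw [map_sub, hodgeForm_apply, hodgeForm_apply]
    ring
  rw [split_slot]
  exact sub_le_sub (hB.map_cons_sub_mem_Icc hφ hψ (Fin.cases (Or.inr rfl) hg)).2
    (hB.map_cons_sub_mem_Icc hφ hψ (Fin.cases (Or.inl rfl) hg)).1

lemma pairingI_nonneg (hB : IsHodgePairing B F) (hφ : φ ∈ F) (hψ : ψ ∈ F) :
    0 ≤ pairingI B φ ψ :=
  (hB.hodgeForm_self_nonneg (fun _ => hφ) (sub_mem_vectorSpan hφ hψ)).trans
    (hB.hodgeForm_sub_self_le_pairingI hφ hψ fun _ => Or.inl rfl)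

lemma pairingI_le_mul_pairingJ (hB : IsHodgePairing B F) (hφ : φ ∈ F) (hψ : ψ ∈ F) :
    pairingI B φ ψ ≤ (m + 2) * pairingJ B ψ φ := by
  set b : ℕ → ℝ := fun j => B (Fin.cons (φ - ψ) (MASetup.mixVec φ ψ j)) with hb
  have b_le (j) : b j ≤ B (Fin.cons (φ - ψ) fun _ => ψ) :=
    (hB.map_cons_sub_mem_Icc hφ hψ fun i => ite_eq_or_eq _ _ _).2
  have b_last : b (m + 1) = B (Fin.cons (φ - ψ) fun _ => φ) := by
    simp only [hb]
    congr 2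
    exact funext fun i => if_pos i.is_lt
  have pairingJ_eq : (m + 2) * pairingJ B ψ φ =
      ∑ j ∈ range (m + 2), (B (Fin.cons (φ - ψ) fun _ => ψ) - b j) := by
    rw [pairingJ, pairingEnergy, mul_sub, mul_inv_cancel_left₀ (by positivity),
      sum_sub_distrib, sum_const, card_range, nsmul_eq_mul]
    push_cast
    rfl
  rw [pairingJ_eq, pairingI, ← b_last]
  exact single_le_sum (f := fun j => B (Fin.cons (φ - ψ) fun _ => ψ) - b j)
    (fun j _ => sub_nonneg.2 (b_le j)) (mem_range.2 (Nat.lt_succ_self _))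

lemma pairingJ_nonneg (hB : IsHodgePairing B F) (hφ : φ ∈ F) (hψ : ψ ∈ F) :
    0 ≤ pairingJ B ψ φ :=
  nonneg_of_mul_nonneg_right
    ((hB.pairingI_nonneg hφ hψ).trans (hB.pairingI_le_mul_pairingJ hφ hψ)) (by positivity)

lemma sq_hodgeForm_update_le (hB : IsHodgePairing B F)
    (hX : ∀ w ∈ F, ∀ w' ∈ F, ∀ h : Fin m → W, (∀ i, h i ∈ F) →
      hodgeForm B h (w - w') (w - w') ≤ X)
    (hψ₁ : ψ₁ ∈ F) (hψ₂ : ψ₂ ∈ F) (hw : w ∈ F) (hg : ∀ i, g i ∈ F) (q : Fin m) :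
    hodgeForm B (Function.update g q w) (ψ₁ - ψ₂) (ψ₁ - ψ₂) ^ 2 ≤
      9 * X * max (hodgeForm B (Function.update g q ψ₁) (ψ₁ - ψ₂) (ψ₁ - ψ₂))
        (hodgeForm B (Function.update g q ψ₂) (ψ₁ - ψ₂) (ψ₁ - ψ₂)) := by
  set u := ψ₁ - ψ₂ with hu
  set Q : W → ℝ := fun x => hodgeForm B (Function.update g q x) u u
  set t : W → ℝ := fun x => hodgeForm B (Function.update g q x) u (w - ψ₁)
  change Q w ^ 2 ≤ 9 * X * max (Q ψ₁) (Q ψ₂)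
  have huV : u ∈ vectorSpan ℝ F := sub_mem_vectorSpan hψ₁ hψ₂
  have update_mem {x : W} (hx : x ∈ F) (i) : Function.update g q x i ∈ F := by
    rw [Function.update_apply]
    split_ifs
    exacts [hx, hg i]
  have Q_nonneg {x : W} (hx : x ∈ F) : 0 ≤ Q x := hB.hodgeForm_self_nonneg (update_mem hx) huV
  have X_nonneg : 0 ≤ X := (Q_nonneg hψ₁).trans (hX _ hψ₁ _ hψ₂ _ (update_mem hψ₁))
  -- Symmetry trades the background entry `w - ψ₁` for `u = ψ₁ - ψ₂`, and multilinearity splits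
  -- the latter into the backgrounds containing `ψ₁` and `ψ₂`.
  have Q_eq : Q w = Q ψ₁ + t ψ₁ - t ψ₂ := by
    have swap := hodgeForm_update_comm hB.symm g q u (w - ψ₁) u
    rw [hodgeForm_update_sub, hu, hodgeForm_update_sub, ← hu] at swap
    linarith
  have sq_t_le {x : W} (hx : x ∈ F) : t x ^ 2 ≤ X * Q x := calc
    t x ^ 2 ≤ Q x * hodgeForm B (Function.update g q x) (w - ψ₁) (w - ψ₁) :=
      hB.sq_hodgeForm_le (update_mem hx) huV (sub_mem_vectorSpan hw hψ₁)
    _ ≤ Q x * X := by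
      gcongr
      exacts [Q_nonneg hx, hX _ hw _ hψ₁ _ (update_mem hx)]
    _ = X * Q x := mul_comm _ _
  have sq_Q_le : Q ψ₁ ^ 2 ≤ X * Q ψ₁ := by
    rw [sq]
    exact mul_le_mul_of_nonneg_right (hX _ hψ₁ _ hψ₂ _ (update_mem hψ₁)) (Q_nonneg hψ₁)
  have le_max₁ : X * Q ψ₁ ≤ X * max (Q ψ₁) (Q ψ₂) := by gcongr; exact le_max_left _ _
  have le_max₂ : X * Q ψ₂ ≤ X * max (Q ψ₁) (Q ψ₂) := by gcongr; exact le_max_right _ _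
  calc Q w ^ 2 = (Q ψ₁ + t ψ₁ - t ψ₂) ^ 2 := by rw [Q_eq]
    _ ≤ 3 * (Q ψ₁ ^ 2 + t ψ₁ ^ 2 + t ψ₂ ^ 2) := by
      linarith [sq_nonneg (Q ψ₁ - t ψ₁), sq_nonneg (Q ψ₁ + t ψ₂), sq_nonneg (t ψ₁ + t ψ₂)]
    _ ≤ 9 * X * max (Q ψ₁) (Q ψ₂) := by linarith [sq_t_le hψ₁, sq_t_le hψ₂]

lemma pow_hodgeForm_le_of_forall_notMem (hB : IsHodgePairing B F)
    (hX : ∀ w ∈ F, ∀ w' ∈ F, ∀ h : Fin m → W, (∀ i, h i ∈ F) →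
      hodgeForm B h (w - w') (w - w') ≤ X)
    (hψ₁ : ψ₁ ∈ F) (hψ₂ : ψ₂ ∈ F) (s : Finset (Fin m)) :
    ∀ g : Fin m → W, (∀ i, g i ∈ F) → (∀ i ∉ s, g i = ψ₁ ∨ g i = ψ₂) →
      hodgeForm B g (ψ₁ - ψ₂) (ψ₁ - ψ₂) ^ 2 ^ #s ≤
        pairingI B ψ₁ ψ₂ * (9 * X) ^ (2 ^ #s - 1) := by
  have huV : ψ₁ - ψ₂ ∈ vectorSpan ℝ F := sub_mem_vectorSpan hψ₁ hψ₂
  have X_nonneg : 0 ≤ X :=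
    (hB.hodgeForm_self_nonneg (fun _ => hψ₁) huV).trans (hX _ hψ₁ _ hψ₂ _ fun _ => hψ₁)
  induction s using Finset.induction with
  | empty =>
    intro g _ hg
    simpa using hB.hodgeForm_sub_self_le_pairingI hψ₁ hψ₂ fun i => hg i (notMem_empty i)
  | insert q s hq ih =>
    intro g hgF hg
    have ih_update {x : W} (hxF : x ∈ F) (hx : x = ψ₁ ∨ x = ψ₂) := by
      refine ih (Function.update g q x) (fun i => ?_) fun i hi => ?_ <;>
        rcases eq_or_ne i q with rfl | hiq
      · rwa [Function.update_self]
      · rw [Function.update_of_ne hiq]; exact hgF i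
      · rwa [Function.update_self]
      · rw [Function.update_of_ne hiq]; exact hg i (by simp [hiq, hi])
    have hsq := hB.sq_hodgeForm_update_le hX hψ₁ hψ₂ (hgF q) hgF q
    rw [Function.update_eq_self] at hsq
    rw [card_insert_of_notMem hq, pow_succ']
    refine pow_two_mul_le_of_sq_le (by positivity) hsq ?_
    rcases max_choice (hodgeForm B (Function.update g q ψ₁) (ψ₁ - ψ₂) (ψ₁ - ψ₂))
      (hodgeForm B (Function.update g q ψ₂) (ψ₁ - ψ₂) (ψ₁ - ψ₂)) with h | h <;> rw [h]
    exacts [ih_update hψ₁ (Or.inl rfl), ih_update hψ₂ (Or.inr rfl)]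

lemma hodgeForm_sub_self_le_of_finite (hB : IsHodgePairing B F) (hF : F.Finite) (hr : r ∈ F)
    (hD : ∀ w ∈ F, pairingI B w r ≤ D) (hw : w ∈ F) (hg : ∀ i, g i ∈ F) :
    hodgeForm B g (w - r) (w - r) ≤ 36 ^ (2 ^ m - 1) * D := by
  obtain ⟨⟨w₀, h₀⟩, ⟨hw₀, hh₀⟩, hmax⟩ := Set.exists_max_image
    (F ×ˢ Set.univ.pi fun _ : Fin m => F) (fun x => hodgeForm B x.2 (x.1 - r) (x.1 - r))
    (hF.prod (Set.Finite.pi fun _ => hF)) ⟨(w, g), hw, fun i _ => hg i⟩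
  replace hh₀ (i) : h₀ i ∈ F := hh₀ i (Set.mem_univ i)
  set X := hodgeForm B h₀ (w₀ - r) (w₀ - r) with hX
  have le_X {x : W} (hx : x ∈ F) {h : Fin m → W} (hh : ∀ i, h i ∈ F) :
      hodgeForm B h (x - r) (x - r) ≤ X := hmax (x, h) ⟨hx, fun i _ => hh i⟩
  have diam_le : ∀ x ∈ F, ∀ x' ∈ F, ∀ h : Fin m → W, (∀ i, h i ∈ F) →
      hodgeForm B h (x - x') (x - x') ≤ 4 * X := fun x hx x' hx' h hh =>
    hB.hodgeForm_sub_self_le_four_mul hr (fun _ hy => le_X hy hh) hh hx hx'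
  have self_improving : X ^ 2 ^ m ≤ pairingI B w₀ r * (36 * X) ^ (2 ^ m - 1) := by
    have key := hB.pow_hodgeForm_le_of_forall_notMem diam_le hw₀ hr univ h₀ hh₀ (by simp)
    rwa [card_univ, Fintype.card_fin, ← mul_assoc, ← hX, show (9 : ℝ) * 4 = 36 by norm_num] at key
  calc hodgeForm B g (w - r) (w - r) ≤ X := le_X hw hg
    _ ≤ 36 ^ (2 ^ m - 1) * pairingI B w₀ r :=
      le_pow_mul_of_pow_le (by positivity)
        (hB.hodgeForm_self_nonneg hh₀ (sub_mem_vectorSpan hw₀ hr))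
        (hB.pairingI_nonneg hw₀ hr) (by norm_num) self_improving
    _ ≤ 36 ^ (2 ^ m - 1) * D := by gcongr; exact hD w₀ hw₀

lemma hodgeForm_sub_self_le_of_pairingI_le (hB : IsHodgePairing B F) (hr : r ∈ F)
    (hD : ∀ w ∈ F, pairingI B w r ≤ D) (hw : w ∈ F) (hg : ∀ i, g i ∈ F) :
    hodgeForm B g (w - r) (w - r) ≤ 36 ^ (2 ^ m - 1) * D := by
  have hGF : {r, w} ∪ Set.range g ⊆ F :=
    Set.union_subset (Set.pair_subset hr hw) (Set.range_subset_iff.2 hg)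
  exact (hB.mono hGF).hodgeForm_sub_self_le_of_finite
    ((Set.toFinite {r, w}).union (Set.finite_range g)) (by simp) (fun x hx => hD x (hGF hx))
    (by simp) fun i => Or.inr ⟨i, rfl⟩

lemma pow_hodgeForm_sub_self_le (hB : IsHodgePairing B F) (hr : r ∈ F)
    (hD : ∀ w ∈ F, pairingI B w r ≤ D) (hψ₁ : ψ₁ ∈ F) (hψ₂ : ψ₂ ∈ F) (hg : ∀ i, g i ∈ F) :
    hodgeForm B g (ψ₁ - ψ₂) (ψ₁ - ψ₂) ^ 2 ^ m ≤
      pairingI B ψ₁ ψ₂ * (36 ^ 2 ^ m * D) ^ (2 ^ m - 1) := by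
  have diam_le : ∀ w ∈ F, ∀ w' ∈ F, ∀ h : Fin m → W, (∀ i, h i ∈ F) →
      hodgeForm B h (w - w') (w - w') ≤ 4 * (36 ^ (2 ^ m - 1) * D) := fun w hw w' hw' h hh =>
    hB.hodgeForm_sub_self_le_four_mul hr
      (fun x hx => hB.hodgeForm_sub_self_le_of_pairingI_le hr hD hx hh) hh hw hw'
  have key := hB.pow_hodgeForm_le_of_forall_notMem diam_le hψ₁ hψ₂ univ g hg (by simp)
  have constant_eq : 9 * (4 * (36 ^ (2 ^ m - 1) * D)) = 36 ^ 2 ^ m * D := by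
    rw [← mul_pow_sub_one (by positivity : 2 ^ m ≠ 0) (36 : ℝ)]
    ring
  rwa [card_univ, Fintype.card_fin, constant_eq] at key

lemma hodgeForm_sub_self_le_rpow (hB : IsHodgePairing B F) (hr : r ∈ F)
    (hM : ∀ w ∈ F, pairingJ B r w ≤ M) (hψ₁ : ψ₁ ∈ F) (hψ₂ : ψ₂ ∈ F) (hg : ∀ i, g i ∈ F) :
    hodgeForm B g (ψ₁ - ψ₂) (ψ₁ - ψ₂) ≤
      pairingI B ψ₁ ψ₂ ^ ((1 : ℝ) / 2 ^ m) *
        (36 ^ 2 ^ m * ((m + 2) * M)) ^ (1 - (1 : ℝ) / 2 ^ m) := by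
  have M_nonneg : 0 ≤ M := (hB.pairingJ_nonneg hr hr).trans (hM r hr)
  have hD : ∀ w ∈ F, pairingI B w r ≤ (m + 2) * M := fun w hw =>
    (hB.pairingI_le_mul_pairingJ hw hr).trans (by gcongr; exact hM w hw)
  have h := le_rpow_mul_rpow_of_pow_le (by positivity)
    (hB.hodgeForm_self_nonneg hg (sub_mem_vectorSpan hψ₁ hψ₂)) (hB.pairingI_nonneg hψ₁ hψ₂)
    (by positivity) (hB.pow_hodgeForm_sub_self_le hr hD hψ₁ hψ₂ hg)
  exact_mod_cast h

lemma abs_hodgeForm_sub_sub_le (hB : IsHodgePairing B F) (hr : r ∈ F)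
    (hM : ∀ w ∈ F, pairingJ B r w ≤ M) (hψ₁ : ψ₁ ∈ F) (hψ₂ : ψ₂ ∈ F) (hφ₁ : φ₁ ∈ F)
    (hφ₂ : φ₂ ∈ F) (hg : ∀ i, g i ∈ F) :
    |hodgeForm B g (ψ₁ - ψ₂) (φ₁ - φ₂)| ≤
      (36 ^ 2 ^ m * ((m + 2) * M)) ^ (1 - (1 : ℝ) / 2 ^ m) *
        pairingI B ψ₁ ψ₂ ^ ((1 : ℝ) / 2 ^ (m + 1)) *
        pairingI B φ₁ φ₂ ^ ((1 : ℝ) / 2 ^ (m + 1)) := by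
  have M_nonneg : 0 ≤ M := (hB.pairingJ_nonneg hr hr).trans (hM r hr)
  have hψ := hB.pairingI_nonneg hψ₁ hψ₂
  have hφ := hB.pairingI_nonneg hφ₁ hφ₂
  have sq_rpow {x : ℝ} (hx : 0 ≤ x) :
      (x ^ ((1 : ℝ) / 2 ^ (m + 1))) ^ 2 = x ^ ((1 : ℝ) / 2 ^ m) := by
    rw [← Real.rpow_mul_natCast hx]
    congr 1
    field_simp
    exact (pow_succ' 2 m).symm
  refine abs_le_of_sq_le_sq ?_ (by positivity)
  set K := (36 ^ 2 ^ m * ((m + 2) * M)) ^ (1 - (1 : ℝ) / 2 ^ m)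
  calc hodgeForm B g (ψ₁ - ψ₂) (φ₁ - φ₂) ^ 2
      ≤ hodgeForm B g (ψ₁ - ψ₂) (ψ₁ - ψ₂) * hodgeForm B g (φ₁ - φ₂) (φ₁ - φ₂) :=
        hB.sq_hodgeForm_le hg (sub_mem_vectorSpan hψ₁ hψ₂) (sub_mem_vectorSpan hφ₁ hφ₂)
    _ ≤ (pairingI B ψ₁ ψ₂ ^ ((1 : ℝ) / 2 ^ m) * K) *
          (pairingI B φ₁ φ₂ ^ ((1 : ℝ) / 2 ^ m) * K) :=
        mul_le_mul (hB.hodgeForm_sub_self_le_rpow hr hM hψ₁ hψ₂ hg)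
          (hB.hodgeForm_sub_self_le_rpow hr hM hφ₁ hφ₂ hg)
          (hB.hodgeForm_self_nonneg hg (sub_mem_vectorSpan hφ₁ hφ₂)) (by positivity)
    _ = (K * pairingI B ψ₁ ψ₂ ^ ((1 : ℝ) / 2 ^ (m + 1)) *
          pairingI B φ₁ φ₂ ^ ((1 : ℝ) / 2 ^ (m + 1))) ^ 2 := by
        rw [mul_pow, mul_pow, sq_rpow hψ, sq_rpow hφ]
        ring

lemma abs_map_cons_sub_map_cons_le (hB : IsHodgePairing B F) (hr : r ∈ F)
    (hM : ∀ w ∈ F, pairingJ B r w ≤ M) (hψ₁ : ψ₁ ∈ F) (hψ₂ : ψ₂ ∈ F)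
    {a b : Fin (m + 1) → W} (ha : ∀ p, a p ∈ F) (hb : ∀ p, b p ∈ F)
    (hD : ∀ p, pairingI B (a p) (b p) ≤ D) :
    |B (Fin.cons (ψ₁ - ψ₂) a) - B (Fin.cons (ψ₁ - ψ₂) b)| ≤
      (m + 1) * ((36 ^ 2 ^ m * ((m + 2) * M)) ^ (1 - (1 : ℝ) / 2 ^ m) *
        pairingI B ψ₁ ψ₂ ^ ((1 : ℝ) / 2 ^ (m + 1)) * D ^ ((1 : ℝ) / 2 ^ (m + 1))) := by
  have M_nonneg : 0 ≤ M := (hB.pairingJ_nonneg hr hr).trans (hM r hr)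
  have hψ := hB.pairingI_nonneg hψ₁ hψ₂
  rw [map_cons_sub_map_cons hB.symm, abs_neg]
  refine (abs_sum_le_sum_abs _ _).trans <|
    (sum_le_card_nsmul _ _ _ fun p _ => ?_).trans_eq <| by
      rw [card_univ, Fintype.card_fin, nsmul_eq_mul, Nat.cast_add_one]
  refine (hB.abs_hodgeForm_sub_sub_le hr hM hψ₁ hψ₂ (ha p) (hb p) fun i => ?_).trans ?_
  · rw [Fin.removeNth_apply]
    split_ifs
    exacts [ha _, hb _]
  · gcongr
    exacts [hB.pairingI_nonneg (ha p) (hb p), hD p]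

end IsHodgePairing

theorem mixed_MA_continuity_general (m : ℕ) :
    ∃ C : ℝ, 0 < C ∧
      ∀ (W : Type*) [AddCommGroup W] [Module ℝ W]
        (B : MultilinearMap ℝ (fun _ : Fin (m + 2) => W) ℝ) (F : Set W), IsHodgePairing B F →
        ∀ φref ∈ F, ∀ ψ₁ ∈ F, ∀ ψ₂ ∈ F,
          ∀ φs φs' : Fin (m + 1) → W, (∀ p, φs p ∈ F) → (∀ p, φs' p ∈ F) →
            |B (Fin.cons (ψ₁ - ψ₂) φs') - B (Fin.cons (ψ₁ - ψ₂) φs)| ≤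
              C * pairingI B ψ₁ ψ₂ ^ ((1 : ℝ) / 2 ^ (m + 1)) *
                (univ.sup' univ_nonempty fun p => pairingI B (φs p) (φs' p)) ^
                  ((1 : ℝ) / 2 ^ (m + 1)) *
                (max (max (pairingJ B φref ψ₁) (pairingJ B φref ψ₂))
                    (max (univ.sup' univ_nonempty fun p => pairingJ B φref (φs p))
                      (univ.sup' univ_nonempty fun p => pairingJ B φref (φs' p)))) ^
                  (1 - (1 : ℝ) / 2 ^ m) := by
  refine ⟨(m + 1) * (36 ^ 2 ^ m * (m + 2)) ^ (1 - (1 : ℝ) / 2 ^ m), by positivity, ?_⟩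
  intro W _ _ B F hB φref hφref ψ₁ hψ₁ ψ₂ hψ₂ φs φs' hφs hφs'
  set M := max (max (pairingJ B φref ψ₁) (pairingJ B φref ψ₂))
    (max (univ.sup' univ_nonempty fun p => pairingJ B φref (φs p))
      (univ.sup' univ_nonempty fun p => pairingJ B φref (φs' p)))
  have hM₁ : pairingJ B φref ψ₁ ≤ M := le_max_of_le_left (le_max_left _ _)
  have hM₂ : pairingJ B φref ψ₂ ≤ M := le_max_of_le_left (le_max_right _ _)
  have hM (p) : pairingJ B φref (φs p) ≤ M := le_max_of_le_right <| le_max_of_le_left <|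
    le_sup' (fun p => pairingJ B φref (φs p)) (mem_univ p)
  have hM' (p) : pairingJ B φref (φs' p) ≤ M := le_max_of_le_right <| le_max_of_le_right <|
    le_sup' (fun p => pairingJ B φref (φs' p)) (mem_univ p)
  have hD (p) : pairingI B (φs p) (φs' p) ≤
      univ.sup' univ_nonempty fun p => pairingI B (φs p) (φs' p) :=
    le_sup' (fun p => pairingI B (φs p) (φs' p)) (mem_univ p)
  have M_nonneg : 0 ≤ M := (hB.pairingJ_nonneg hψ₁ hφref).trans hM₁
  have sublevel := hB.mono (Set.sep_subset F fun w => pairingJ B φref w ≤ M)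
  rw [abs_sub_comm]
  refine (sublevel.abs_map_cons_sub_map_cons_le ⟨hφref, (pairingJ_self φref).trans_le M_nonneg⟩
    (fun w hw => hw.2) ⟨hψ₁, hM₁⟩ ⟨hψ₂, hM₂⟩ (fun p => ⟨hφs p, hM p⟩)
    (fun p => ⟨hφs' p, hM' p⟩) hD).trans_eq ?_
  rw [← mul_assoc _ _ M, Real.mul_rpow (by positivity) M_nonneg]
  ring

/-- there is `C > 0` depending only on `n = m + 1` such that for
every setup, reference `φ_ref ∈ F`, and all `ψ₁, ψ₂, φ₁, …, φₙ, φ'₁, …, φ'ₙ ∈ F`: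
`|B(ψ₁-ψ₂, φ'₁,…,φ'ₙ) - B(ψ₁-ψ₂, φ₁,…,φₙ)| ≤
  C I(ψ₁,ψ₂)^{1/2ⁿ} (max_p I(φ_p,φ'_p))^{1/2ⁿ} M^{1-1/2^{n-1}}` where
`M = max{J(ψ₁), J(ψ₂), max_p J(φ_p), max_p J(φ'_p)}`. -/
theorem mixed_MA_continuity (m : ℕ) :
    ∃ C : ℝ, 0 < C ∧
      ∀ (W : Type*) [AddCommGroup W] [Module ℝ W] (S : MASetup m W),
        ∀ φref ∈ S.F, ∀ ψ₁ ∈ S.F, ∀ ψ₂ ∈ S.F,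
          ∀ φs φs' : Fin (m + 1) → W, (∀ p, φs p ∈ S.F) → (∀ p, φs' p ∈ S.F) →
            |S.B (Fin.cons (ψ₁ - ψ₂) φs') - S.B (Fin.cons (ψ₁ - ψ₂) φs)| ≤
              C * S.Ifun ψ₁ ψ₂ ^ ((1 : ℝ) / 2 ^ (m + 1)) *
                (Finset.univ.sup' Finset.univ_nonempty
                    fun p => S.Ifun (φs p) (φs' p)) ^ ((1 : ℝ) / 2 ^ (m + 1)) *
                (max (max (S.Jfun φref ψ₁) (S.Jfun φref ψ₂))
                    (max
                      (Finset.univ.sup' Finset.univ_nonempty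
                        fun p => S.Jfun φref (φs p))
                      (Finset.univ.sup' Finset.univ_nonempty
                        fun p => S.Jfun φref (φs' p)))) ^
                  (1 - (1 : ℝ) / 2 ^ m) := by
  obtain ⟨C, hC, bound⟩ := mixed_MA_continuity_general m
  exact ⟨C, hC, fun W _ _ S => bound W S.B S.F S.isHodgePairing⟩
end

section
/- There exists a constant C > 0 depending only on n such that, for every abstract Monge–Ampère pairing setup (W, B, 𝟙, F) as in the context, every choice of reference element φ_ref ∈ F, and all φ₁, φ₂, ψ₁, ψ₂ ∈ F: B(ψ₁−ψ₂, φ₁, …, φ₁) − B(ψ₁−ψ₂, φ₂, …, φ₂) ≤ C · I(ψ₁, ψ₂)^{1/2ⁿ} · I(φ₁, φ₂)^{1/2ⁿ} · M^{1 − 1/2^{n−1}}, where φᵢ fills the last n slots and M := max{J(φ₁), J(φ₂), J(ψ₁), J(ψ₂)} (i.e., ∫(ψ₁−ψ₂)(MA(φ₁) − MA(φ₂)) ≤ C·I(ψ₁,ψ₂)^{1/2ⁿ}·I(φ₁,φ₂)^{1/2ⁿ}·M^{1−1/2^{n−1}}). -/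
/-!
Telescoping slot by slot writes `B(w, φ₁, …, φ₁) - B(w, φ₂, …, φ₂)` as a sum of mixed pairings
`B(w, φ₁ - φ₂, χ)`, and for each background `χ` in `F` the form `D_χ(u, v) = -B(u, v, χ)` is
positive semidefinite on differences. Cauchy–Schwarz thus reduces the theorem to bounds on
`D_χ(x - y, x - y)`.

If every entry of `χ` is `x` or `y`, this is at most `I(x, y)`, since `I(x, y)` is a sum of such
terms. An arbitrary entry `z` is exchanged for `x` by writing `z = x + (z - x)`: symmetry of `B`
moves the increment `z - x` into the form, where Cauchy–Schwarz pairs it with `x - y`. One exchange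
turns a bound `R` into `3√(RQ)`, where `Q` bounds all the forms in play, so `n - 1` exchanges yield
`9 I(x, y)^(1/2ⁿ⁻¹) Q^(1 - 1/2ⁿ⁻¹)`. Finally, taking for `Q` the maximum over finitely many
potentials and `y` the reference point, this estimate bounds `Q` by a multiple of
`(max I)^(1/2ⁿ⁻¹) Q^(1 - 1/2ⁿ⁻¹)`, hence by a multiple of `max I ≤ (n + 1) max J`.
-/

open Finset

section SymmetricMultilinear

section Semiring

variable {ι R M N : Type*} [Semiring R] [AddCommMonoid M] [Module R M] [AddCommMonoid N]
  [Module R N] {n : ℕ}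

/-- Symmetry of a multilinear map: invariance under permutations of its arguments. -/
def IsSymmMultilinear (f : MultilinearMap R (fun _ : ι => M) N) : Prop :=
  ∀ (v : ι → M) (σ : Equiv.Perm ι), f (v ∘ σ) = f v

namespace IsSymmMultilinear

theorem curryLeft {R M N : Type*} [CommSemiring R] [AddCommMonoid M] [Module R M]
    [AddCommMonoid N] [Module R N] {f : MultilinearMap R (fun _ : Fin (n + 1) => M) N}
    (hf : IsSymmMultilinear f) (w : M) : IsSymmMultilinear (f.curryLeft w) := by
  intro v σ
  have hcons : (Fin.cons w (v ∘ σ) : Fin (n + 1) → M) =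
      Fin.cons w v ∘ Equiv.Perm.decomposeFin.symm (0, σ) := by
    ext i
    cases i using Fin.cases <;> simp
  simp only [MultilinearMap.curryLeft_apply, hcons, hf _ _]

variable {f : MultilinearMap R (fun _ : Fin (n + 1) => M) N}

theorem map_cons_update_comm (hf : IsSymmMultilinear f) (x y : M) (χ : Fin n → M) (i : Fin n) :
    f (Fin.cons y (Function.update χ i x)) = f (Fin.cons x (Function.update χ i y)) := by
  rw [← hf (Fin.cons x _) (Equiv.swap 0 i.succ), Equiv.comp_swap_eq_update]
  simp [← Fin.cons_update]

theorem map_insertNth (hf : IsSymmMultilinear f) (j : Fin (n + 1)) (x : M) (χ : Fin n → M) :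
    f (j.insertNth x χ) = f (Fin.cons x χ) := by
  rw [← hf (j.insertNth x χ) j.cycleRange.symm, Fin.insertNth_comp_cycleRange_symm]

end IsSymmMultilinear

end Semiring

variable {n : ℕ}

/-- The background in the `j`-th term of the telescoping expansion of `f a - f b`: the entries of
`a` before the slot `j` and those of `b` after it. -/
def telescopeSlots {α : Type*} (a b : Fin (n + 1) → α) (j : Fin (n + 1)) : Fin n → α :=
  j.removeNth fun k => if k < j then a k else b k

theorem telescopeSlots_mem {α : Type*} {s : Set α} {a b : Fin (n + 1) → α} (ha : ∀ k, a k ∈ s)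
    (hb : ∀ k, b k ∈ s) (j : Fin (n + 1)) (i : Fin n) : telescopeSlots a b j i ∈ s := by
  simp only [telescopeSlots, Fin.removeNth]
  split_ifs
  exacts [ha _, hb _]

theorem IsSymmMultilinear.map_sub_map {R M N : Type*} [Ring R] [AddCommGroup M] [Module R M]
    [AddCommGroup N] [Module R N] {f : MultilinearMap R (fun _ : Fin (n + 1) => M) N}
    (hf : IsSymmMultilinear f) (a b : Fin (n + 1) → M) :
    f a - f b = ∑ j, f (Fin.cons (a j - b j) (telescopeSlots a b j)) := by
  have h := f.map_piecewise_sub_map_piecewise a b a univ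
  simp only [piecewise_univ, mem_univ, if_true] at h
  refine h.trans (sum_congr rfl fun j _ => ?_)
  rw [← hf.map_insertNth j]
  congr 1
  rw [Fin.eq_insertNth_iff]
  refine ⟨by simp, ?_⟩
  ext i
  simp [telescopeSlots, Fin.removeNth]

end SymmetricMultilinear

section DyadicMean

variable {a a' b q c : ℝ} {k : ℕ}

/-- The weighted geometric mean of `a` and `b` with weights `2⁻ᵏ` and `1 - 2⁻ᵏ`, which is what `k`
iterations of `t ↦ √(t * b)` make of `a`. -/
noncomputable def dyadicMean (a b : ℝ) (k : ℕ) : ℝ :=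
  a ^ ((1 : ℝ) / 2 ^ k) * b ^ (1 - (1 : ℝ) / 2 ^ k)

theorem one_sub_one_div_two_pow_nonneg (k : ℕ) : (0 : ℝ) ≤ 1 - 1 / 2 ^ k :=
  sub_nonneg.2 (div_le_one_of_le₀ (one_le_pow₀ one_le_two) (by positivity))

theorem sqrt_rpow_one_div_two_pow (ha : 0 ≤ a) (k : ℕ) :
    √(a ^ ((1 : ℝ) / 2 ^ k)) = a ^ ((1 : ℝ) / 2 ^ (k + 1)) := by
  rw [Real.sqrt_eq_rpow, ← Real.rpow_mul ha]
  congr 1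
  field

theorem dyadicMean_zero (a b : ℝ) : dyadicMean a b 0 = a := by
  simp [dyadicMean]

theorem dyadicMean_nonneg (ha : 0 ≤ a) (hb : 0 ≤ b) (k : ℕ) : 0 ≤ dyadicMean a b k := by
  unfold dyadicMean
  positivity

theorem dyadicMean_le_dyadicMean_left (ha : 0 ≤ a) (haa' : a ≤ a') (hb : 0 ≤ b) (k : ℕ) :
    dyadicMean a b k ≤ dyadicMean a' b k := by
  unfold dyadicMean
  gcongr

theorem sqrt_dyadicMean_mul_right (ha : 0 ≤ a) (hb : 0 ≤ b) (k : ℕ) :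
    √(dyadicMean a b k * b) = dyadicMean a b (k + 1) := by
  have hpow : b ^ (1 - (1 : ℝ) / 2 ^ k) * b = b ^ (1 - (1 : ℝ) / 2 ^ k + 1) := by
    rw [Real.rpow_add_of_nonneg hb (one_sub_one_div_two_pow_nonneg k) zero_le_one, Real.rpow_one]
  rw [dyadicMean, mul_assoc, hpow, Real.sqrt_mul (by positivity), sqrt_rpow_one_div_two_pow ha,
    Real.sqrt_eq_rpow, ← Real.rpow_mul hb, dyadicMean]
  congr 2
  field

theorem sqrt_dyadicMean_mul_dyadicMean (ha : 0 ≤ a) (hb : 0 ≤ b) (hq : 0 ≤ q) (k : ℕ) :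
    √(dyadicMean a q k * dyadicMean b q k) =
      a ^ ((1 : ℝ) / 2 ^ (k + 1)) * b ^ ((1 : ℝ) / 2 ^ (k + 1)) * q ^ (1 - (1 : ℝ) / 2 ^ k) := by
  rw [dyadicMean, dyadicMean, mul_mul_mul_comm, Real.sqrt_mul (by positivity),
    Real.sqrt_mul_self (by positivity), Real.sqrt_mul (by positivity),
    sqrt_rpow_one_div_two_pow ha, sqrt_rpow_one_div_two_pow hb]

theorem le_pow_mul_of_le_mul_dyadicMean (ha : 0 ≤ a) (hb : 0 ≤ b) (hc : 0 ≤ c)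
    (h : b ≤ c * dyadicMean a b k) : b ≤ c ^ 2 ^ k * a := by
  induction k generalizing c with
  | zero => simpa [dyadicMean_zero] using h
  | succ k ih =>
    rcases hb.eq_or_lt with rfl | hpos
    · positivity
    have hsq : b * b ≤ c ^ 2 * dyadicMean a b k * b := by
      calc b * b ≤ (c * dyadicMean a b (k + 1)) * (c * dyadicMean a b (k + 1)) :=
            mul_self_le_mul_self hb h
        _ = c ^ 2 * dyadicMean a b (k + 1) ^ 2 := by ring
        _ = c ^ 2 * dyadicMean a b k * b := by
          rw [← sqrt_dyadicMean_mul_right ha hb,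
            Real.sq_sqrt (mul_nonneg (dyadicMean_nonneg ha hb k) hb), mul_assoc]
    have := ih (sq_nonneg c) (le_of_mul_le_mul_right hsq hpos)
    rwa [← pow_mul, ← pow_succ'] at this

end DyadicMean

section HodgeForms

variable {m : ℕ} {W : Type*} [AddCommGroup W] [Module ℝ W]
  {B : MultilinearMap ℝ (fun _ : Fin (m + 2) => W) ℝ} {F T : Set W} {χ : Fin m → W}
  {r s t u v x y : W} {M Q R : ℝ}

/-- The Dirichlet form `(u, v) ↦ -B(u, v, χ)` with background `χ`, which models
`∫ du ∧ dᶜv ∧ ddᶜχ₁ ∧ ⋯ ∧ ddᶜχₙ₋₁`. -/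
noncomputable def dirichletForm (B : MultilinearMap ℝ (fun _ : Fin (m + 2) => W) ℝ)
    (χ : Fin m → W) : LinearMap.BilinForm ℝ W :=
  LinearMap.mk₂ ℝ (fun u v => -B (Fin.cons u (Fin.cons v χ)))
    (fun u u' v => by rw [B.cons_add, neg_add])
    (fun c u v => by rw [B.cons_smul, smul_neg])
    (fun u v v' => by simp only [← B.curryLeft_apply, (B.curryLeft u).cons_add, neg_add])
    (fun c u v => by simp only [← B.curryLeft_apply, (B.curryLeft u).cons_smul, smul_neg])

theorem dirichletForm_apply (B : MultilinearMap ℝ (fun _ : Fin (m + 2) => W) ℝ) (χ : Fin m → W)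
    (u v : W) : dirichletForm B χ u v = -B (Fin.cons u (Fin.cons v χ)) :=
  rfl

namespace IsSymmMultilinear

theorem dirichletForm_comm (hB : IsSymmMultilinear B) (χ : Fin m → W) (u v : W) :
    dirichletForm B χ u v = dirichletForm B χ v u := by
  have h := hB.map_cons_update_comm v u (Fin.cons v χ) 0
  simp only [Fin.update_cons_zero] at h
  rw [dirichletForm_apply, dirichletForm_apply, h]

theorem dirichletForm_update_comm (hB : IsSymmMultilinear B) (χ : Fin m → W) (i : Fin m)
    (u x y : W) :
    dirichletForm B (Function.update χ i x) u y = dirichletForm B (Function.update χ i y) u x :=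
  congrArg Neg.neg ((hB.curryLeft u).map_cons_update_comm x y χ i)

theorem dirichletForm_sub_dirichletForm_update (hB : IsSymmMultilinear B) (χ : Fin m → W)
    (i : Fin m) (u x y : W) :
    dirichletForm B χ u (x - y) - dirichletForm B (Function.update χ i x) u (x - y) =
      dirichletForm B (Function.update χ i x) u (χ i - x) -
        dirichletForm B (Function.update χ i y) u (χ i - x) := by
  have hx := hB.dirichletForm_update_comm χ i u (χ i) x
  have hy := hB.dirichletForm_update_comm χ i u (χ i) y
  have hxy := hB.dirichletForm_update_comm χ i u x y
  rw [Function.update_eq_self] at hx hy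
  simp only [map_sub]
  linarith

theorem map_cons_sub_map_cons (hB : IsSymmMultilinear B) (w : W) (a b : Fin (m + 1) → W) :
    B (Fin.cons w b) - B (Fin.cons w a) =
      ∑ j, dirichletForm B (telescopeSlots a b j) w (a j - b j) := by
  have h := (hB.curryLeft w).map_sub_map a b
  simp only [MultilinearMap.curryLeft_apply] at h
  simp only [dirichletForm_apply, sum_neg_distrib, ← h, neg_sub]

end IsSymmMultilinear

/-- `B` satisfies the local Hodge index inequality on `F`: it is symmetric, and its Dirichlet forms
with background in `F` are positive semidefinite on the span of the differences of `F`. -/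
structure IsHodgeOn (B : MultilinearMap ℝ (fun _ : Fin (m + 2) => W) ℝ) (F : Set W) : Prop where
  isSymm : IsSymmMultilinear B
  nonpos : ∀ u ∈ vectorSpan ℝ F, ∀ χ : Fin m → W, (∀ i, χ i ∈ F) →
    B (Fin.cons u (Fin.cons u χ)) ≤ 0

/-- Aubin's functional `I(x, y) = B(x - y, y, …, y) - B(x - y, x, …, x)`. -/
noncomputable def aubinI (B : MultilinearMap ℝ (fun _ : Fin (m + 2) => W) ℝ) (x y : W) : ℝ :=
  B (Fin.cons (x - y) fun _ => y) - B (Fin.cons (x - y) fun _ => x)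

/-- Aubin's functional `J_y(x) = B(x - y, y, …, y) - E(x, y)`, where `E` is the energy
`(n + 1)⁻¹ ∑ⱼ B(x - y, x, …, x, y, …, y)` with `j` copies of `x` and `n = m + 1`. -/
noncomputable def aubinJ (B : MultilinearMap ℝ (fun _ : Fin (m + 2) => W) ℝ) (y x : W) : ℝ :=
  B (Fin.cons (x - y) fun _ => y) -
    ((m : ℝ) + 2)⁻¹ * ∑ j ∈ range (m + 2), B (Fin.cons (x - y) (MASetup.mixVec x y j))

/-- `Q` bounds all Dirichlet energies of differences of elements of `T` with background in `T`. -/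
def DirichletBoundOn (B : MultilinearMap ℝ (fun _ : Fin (m + 2) => W) ℝ) (T : Set W) (Q : ℝ) :
    Prop :=
  ∀ s ∈ T, ∀ t ∈ T, ∀ χ : Fin m → W, (∀ i, χ i ∈ T) → dirichletForm B χ (s - t) (s - t) ≤ Q

namespace IsHodgeOn

theorem mono (hB : IsHodgeOn B F) (hTF : T ⊆ F) : IsHodgeOn B T where
  isSymm := hB.isSymm
  nonpos u hu χ hχ := hB.nonpos u (vectorSpan_mono ℝ hTF hu) χ fun i => hTF (hχ i)

theorem dirichletForm_self_nonneg (hB : IsHodgeOn B F) (hχ : ∀ i, χ i ∈ F)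
    (hu : u ∈ vectorSpan ℝ F) : 0 ≤ dirichletForm B χ u u :=
  neg_nonneg.2 (hB.nonpos u hu χ hχ)

theorem abs_dirichletForm_le_sqrt (hB : IsHodgeOn B F) (hχ : ∀ i, χ i ∈ F)
    (hu : u ∈ vectorSpan ℝ F) (hv : v ∈ vectorSpan ℝ F) (huR : dirichletForm B χ u u ≤ R)
    (hvQ : dirichletForm B χ v v ≤ Q) : |dirichletForm B χ u v| ≤ √(R * Q) := by
  have hCS := ((dirichletForm B χ).restrict (vectorSpan ℝ F)).apply_sq_le_of_symm
    (fun z => hB.dirichletForm_self_nonneg hχ z.2)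
    ⟨fun z z' => hB.isSymm.dirichletForm_comm χ z z'⟩ ⟨u, hu⟩ ⟨v, hv⟩
  have hu0 := hB.dirichletForm_self_nonneg hχ hu
  have hv0 := hB.dirichletForm_self_nonneg hχ hv
  exact Real.abs_le_sqrt (hCS.trans (mul_le_mul huR hvQ hv0 (hu0.trans huR)))

theorem dirichletForm_sub_le_add (hB : IsHodgeOn B F) (hχ : ∀ i, χ i ∈ F)
    (hu : u ∈ vectorSpan ℝ F) (hv : v ∈ vectorSpan ℝ F) :
    dirichletForm B χ (u - v) (u - v) ≤
      2 * dirichletForm B χ u u + 2 * dirichletForm B χ v v := by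
  have h := hB.dirichletForm_self_nonneg hχ (add_mem hu hv)
  simp only [map_add, map_sub, LinearMap.add_apply, LinearMap.sub_apply] at h ⊢
  linarith

theorem map_cons_le_map_cons (hB : IsHodgeOn B F) {a b : Fin (m + 1) → W} (ha : ∀ i, a i ∈ F)
    (hb : ∀ i, b i ∈ F) (hu : u ∈ vectorSpan ℝ F) (hab : ∀ i, a i = b i ∨ a i - b i = u) :
    B (Fin.cons u a) ≤ B (Fin.cons u b) := by
  rw [← sub_nonneg, hB.isSymm.map_cons_sub_map_cons]
  refine sum_nonneg fun j _ => ?_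
  rcases hab j with h | h
  · simp [h]
  · rw [h]
    exact hB.dirichletForm_self_nonneg (telescopeSlots_mem ha hb j) hu

section MixedBackground

variable {a : Fin (m + 1) → W}

theorem map_cons_const_left_le (hB : IsHodgeOn B F) (hx : x ∈ F) (hy : y ∈ F)
    (ha : ∀ i, a i = x ∨ a i = y) :
    B (Fin.cons (x - y) fun _ => x) ≤ B (Fin.cons (x - y) a) := by
  refine hB.map_cons_le_map_cons (fun _ => hx) (fun i => ?_) (vsub_mem_vectorSpan ℝ hx hy)
    fun i => ?_
  · rcases ha i with h | h <;> rwa [h]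
  · rcases ha i with h | h <;> simp [h]

theorem map_cons_le_const_right (hB : IsHodgeOn B F) (hx : x ∈ F) (hy : y ∈ F)
    (ha : ∀ i, a i = x ∨ a i = y) :
    B (Fin.cons (x - y) a) ≤ B (Fin.cons (x - y) fun _ => y) := by
  refine hB.map_cons_le_map_cons (fun i => ?_) (fun _ => hy) (vsub_mem_vectorSpan ℝ hx hy)
    fun i => ?_
  · rcases ha i with h | h <;> rwa [h]
  · rcases ha i with h | h <;> simp [h]

end MixedBackground

theorem aubinI_nonneg (hB : IsHodgeOn B F) (hx : x ∈ F) (hy : y ∈ F) : 0 ≤ aubinI B x y :=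
  sub_nonneg.2 (hB.map_cons_const_left_le hx hy fun _ => .inr rfl)

theorem dirichletForm_le_aubinI (hB : IsHodgeOn B F) (hx : x ∈ F) (hy : y ∈ F)
    (hχ : ∀ i, χ i = x ∨ χ i = y) : dirichletForm B χ (x - y) (x - y) ≤ aubinI B x y := by
  have hlow := hB.map_cons_const_left_le hx hy (a := Fin.cons x χ) (Fin.cases (.inl rfl) hχ)
  have hupp := hB.map_cons_le_const_right hx hy (a := Fin.cons y χ) (Fin.cases (.inr rfl) hχ)
  rw [map_sub, dirichletForm_apply, dirichletForm_apply, aubinI]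
  linarith

theorem aubinI_le_mul_aubinJ (hB : IsHodgeOn B F) (hx : x ∈ F) (hy : y ∈ F) :
    aubinI B x y ≤ (m + 2) * aubinJ B y x := by
  have hlast : B (Fin.cons (x - y) (MASetup.mixVec x y (m + 1))) =
      B (Fin.cons (x - y) fun _ => x) := by
    congr 2
    ext i
    simp only [MASetup.mixVec, i.isLt, if_true]
  have hsum : ∑ j ∈ range (m + 1), B (Fin.cons (x - y) (MASetup.mixVec x y j)) ≤
      (m + 1) * B (Fin.cons (x - y) fun _ => y) := by
    have hterm (j : ℕ) : B (Fin.cons (x - y) (MASetup.mixVec x y j)) ≤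
        B (Fin.cons (x - y) fun _ => y) :=
      hB.map_cons_le_const_right hx hy fun _ => ite_eq_or_eq _ _ _
    exact (sum_le_card_nsmul _ _ _ fun j _ => hterm j).trans_eq (by simp)
  rw [aubinJ, sum_range_succ, hlast, mul_sub, mul_inv_cancel_left₀ (by positivity), aubinI]
  linarith

theorem dirichletForm_le_three_mul_sqrt (hB : IsHodgeOn B T) (hQ : DirichletBoundOn B T Q)
    (hx : x ∈ T) (hy : y ∈ T) (hχ : ∀ i, χ i ∈ T) (i : Fin m)
    (hxR : dirichletForm B (Function.update χ i x) (x - y) (x - y) ≤ R)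
    (hyR : dirichletForm B (Function.update χ i y) (x - y) (x - y) ≤ R) :
    dirichletForm B χ (x - y) (x - y) ≤ 3 * √(R * Q) := by
  have hmem {z : W} (hz : z ∈ T) (k : Fin m) : Function.update χ i z k ∈ T := by
    rcases eq_or_ne k i with rfl | hk <;> simp [*]
  have hxy := vsub_mem_vectorSpan ℝ hx hy
  have hix := vsub_mem_vectorSpan ℝ (hχ i) hx
  have hself := hB.abs_dirichletForm_le_sqrt (hmem hx) hxy hxy hxR (hQ x hx y hy _ (hmem hx))
  have hincx := hB.abs_dirichletForm_le_sqrt (hmem hx) hxy hix hxR (hQ _ (hχ i) x hx _ (hmem hx))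
  have hincy := hB.abs_dirichletForm_le_sqrt (hmem hy) hxy hix hyR (hQ _ (hχ i) x hx _ (hmem hy))
  have hsplit := hB.isSymm.dirichletForm_sub_dirichletForm_update χ i (x - y) x y
  simp only [vsub_eq_sub] at hself hincx hincy
  linarith [le_of_abs_le hself, le_of_abs_le hincx, neg_le_of_abs_le hincy]

/-- The constant `9` is the fixed point of `c ↦ 3√c`, the effect of one exchange on constants. -/
theorem dirichletForm_le_nine_mul_dyadicMean_card (hB : IsHodgeOn B T)
    (hQ : DirichletBoundOn B T Q) (hx : x ∈ T) (hy : y ∈ T) (s : Finset (Fin m))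
    (hχ : ∀ i, χ i ∈ T) (hχs : ∀ i ∉ s, χ i = x ∨ χ i = y) :
    dirichletForm B χ (x - y) (x - y) ≤ 9 * dyadicMean (aubinI B x y) Q #s := by
  have hI := hB.aubinI_nonneg hx hy
  induction s using Finset.induction_on generalizing χ with
  | empty =>
    rw [card_empty, dyadicMean_zero]
    linarith [hB.dirichletForm_le_aubinI hx hy fun i => hχs i (notMem_empty i)]
  | insert j s hj ih =>
    have hQ0 : 0 ≤ Q :=
      (hB.dirichletForm_self_nonneg hχ (vsub_mem_vectorSpan ℝ hx hy)).trans (hQ x hx y hy χ hχ)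
    have hupdate {z : W} (hz : z ∈ T) (hzxy : z = x ∨ z = y) :
        dirichletForm B (Function.update χ j z) (x - y) (x - y) ≤
          9 * dyadicMean (aubinI B x y) Q #s := by
      refine ih (fun i => ?_) fun i hi => ?_
      · rcases eq_or_ne i j with rfl | hij <;> simp [*]
      · rcases eq_or_ne i j with rfl | hij
        · simpa using hzxy
        · simpa [hij] using hχs i (by simp [hij, hi])
    have hstep := hB.dirichletForm_le_three_mul_sqrt hQ hx hy hχ j (hupdate hx (.inl rfl))
      (hupdate hy (.inr rfl))
    have hnine : √(9 : ℝ) = 3 := by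
      rw [show (9 : ℝ) = 3 ^ 2 by norm_num, Real.sqrt_sq (by norm_num)]
    rw [mul_assoc, Real.sqrt_mul (by norm_num), sqrt_dyadicMean_mul_right hI hQ0, hnine] at hstep
    rw [card_insert_of_notMem hj]
    linarith

theorem dirichletForm_le_nine_mul_dyadicMean (hB : IsHodgeOn B T) (hQ : DirichletBoundOn B T Q)
    (hx : x ∈ T) (hy : y ∈ T) (hχ : ∀ i, χ i ∈ T) :
    dirichletForm B χ (x - y) (x - y) ≤ 9 * dyadicMean (aubinI B x y) Q m := by
  simpa using hB.dirichletForm_le_nine_mul_dyadicMean_card hQ hx hy univ hχ (by simp)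

theorem dirichletForm_sub_le_mul_dyadicMean (hB : IsHodgeOn B T) (hQ : DirichletBoundOn B T Q)
    (hr : r ∈ T) (hI : ∀ z ∈ T, aubinI B z r ≤ M) (hs : s ∈ T) (ht : t ∈ T) (hχ : ∀ i, χ i ∈ T) :
    dirichletForm B χ (s - t) (s - t) ≤ 36 * dyadicMean M Q m := by
  have hsr := vsub_mem_vectorSpan ℝ hs hr
  have htr := vsub_mem_vectorSpan ℝ ht hr
  have hQ0 : 0 ≤ Q := (hB.dirichletForm_self_nonneg hχ hsr).trans (hQ s hs r hr χ hχ)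
  have href {z : W} (hz : z ∈ T) :
      dirichletForm B χ (z - r) (z - r) ≤ 9 * dyadicMean M Q m := by
    have hmean := dyadicMean_le_dyadicMean_left (hB.aubinI_nonneg hz hr) (hI z hz) hQ0 m
    linarith [hB.dirichletForm_le_nine_mul_dyadicMean hQ hz hr hχ]
  have hpar := hB.dirichletForm_sub_le_add hχ hsr htr
  simp only [vsub_eq_sub, sub_sub_sub_cancel_right] at hpar
  linarith [href hs, href ht]

theorem dirichletBoundOn_of_finite (hB : IsHodgeOn B T) (hT : T.Finite) (hr : r ∈ T)
    (hI : ∀ z ∈ T, aubinI B z r ≤ M) : DirichletBoundOn B T (36 ^ 2 ^ m * M) := by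
  have : Finite T := hT
  have : Nonempty T := ⟨⟨r, hr⟩⟩
  obtain ⟨⟨s, t, χ⟩, hmax⟩ := Finite.exists_max fun p : T × T × (Fin m → T) =>
    dirichletForm B (fun i => (p.2.2 i : W)) (p.1 - p.2.1) (p.1 - p.2.1)
  let Q := dirichletForm B (fun i => (χ i : W)) (s - t) (s - t)
  have hQ : DirichletBoundOn B T Q := fun s hs t ht χ hχ =>
    hmax ⟨⟨s, hs⟩, ⟨t, ht⟩, fun i => ⟨χ i, hχ i⟩⟩
  have hχ : ∀ i, (χ i : W) ∈ T := fun i => (χ i).2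
  have hQ0 : 0 ≤ Q := hB.dirichletForm_self_nonneg hχ (vsub_mem_vectorSpan ℝ s.2 t.2)
  have hM0 : 0 ≤ M := (hB.aubinI_nonneg hr hr).trans (hI r hr)
  have hself : Q ≤ 36 * dyadicMean M Q m :=
    hB.dirichletForm_sub_le_mul_dyadicMean hQ hr hI s.2 t.2 hχ
  have hQM := le_pow_mul_of_le_mul_dyadicMean hM0 hQ0 (by norm_num) hself
  exact fun s hs t ht χ hχ => (hQ s hs t ht χ hχ).trans hQM

theorem dirichletBoundOn (hB : IsHodgeOn B T) (hr : r ∈ T) (hI : ∀ z ∈ T, aubinI B z r ≤ M) :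
    DirichletBoundOn B T (36 ^ 2 ^ m * M) := by
  intro s hs t ht χ hχ
  let T' : Set W := {r, s, t} ∪ Set.range χ
  have hT'T : T' ⊆ T :=
    Set.union_subset (by simp [Set.insert_subset_iff, hr, hs, ht]) (Set.range_subset_iff.2 hχ)
  have hT' : T'.Finite := (Set.toFinite _).union (Set.finite_range χ)
  exact (hB.mono hT'T).dirichletBoundOn_of_finite hT' (by simp [T']) (fun z hz => hI z (hT'T hz))
    s (by simp [T']) t (by simp [T']) χ (by simp [T'])

theorem abs_dirichletForm_sub_sub_le (hB : IsHodgeOn B T) (hQ : DirichletBoundOn B T Q)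
    (hs : s ∈ T) (ht : t ∈ T) (hx : x ∈ T) (hy : y ∈ T) (hχ : ∀ i, χ i ∈ T) :
    |dirichletForm B χ (s - t) (x - y)| ≤
      9 * (aubinI B s t ^ ((1 : ℝ) / 2 ^ (m + 1)) * aubinI B x y ^ ((1 : ℝ) / 2 ^ (m + 1)) *
        Q ^ (1 - (1 : ℝ) / 2 ^ m)) := by
  have hst := vsub_mem_vectorSpan ℝ hs ht
  have hQ0 : 0 ≤ Q := (hB.dirichletForm_self_nonneg hχ hst).trans (hQ s hs t ht χ hχ)
  have hCS := hB.abs_dirichletForm_le_sqrt hχ hst (vsub_mem_vectorSpan ℝ hx hy)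
    (hB.dirichletForm_le_nine_mul_dyadicMean hQ hs ht hχ)
    (hB.dirichletForm_le_nine_mul_dyadicMean hQ hx hy hχ)
  rwa [mul_mul_mul_comm, Real.sqrt_mul (by norm_num), Real.sqrt_mul_self (by norm_num),
    sqrt_dyadicMean_mul_dyadicMean (hB.aubinI_nonneg hs ht) (hB.aubinI_nonneg hx hy) hQ0] at hCS

theorem map_cons_sub_map_cons_le (hB : IsHodgeOn B T) (hQ : DirichletBoundOn B T Q)
    (hs : s ∈ T) (ht : t ∈ T) (hx : x ∈ T) (hy : y ∈ T) :
    B (Fin.cons (s - t) fun _ => x) - B (Fin.cons (s - t) fun _ => y) ≤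
      (m + 1) * (9 * (aubinI B s t ^ ((1 : ℝ) / 2 ^ (m + 1)) *
        aubinI B x y ^ ((1 : ℝ) / 2 ^ (m + 1)) * Q ^ (1 - (1 : ℝ) / 2 ^ m))) := by
  rw [← neg_sub, hB.isSymm.map_cons_sub_map_cons, ← sum_neg_distrib]
  refine (sum_le_card_nsmul _ _ _ fun j _ => (neg_le_abs _).trans
    (hB.abs_dirichletForm_sub_sub_le hQ hs ht hx hy
      (telescopeSlots_mem (fun _ => hx) (fun _ => hy) j))).trans_eq ?_
  simp

end IsHodgeOn

end HodgeForms

theorem MASetup.isHodgeOn {m : ℕ} {W : Type*} [AddCommGroup W] [Module ℝ W] (S : MASetup m W) :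
    IsHodgeOn S.B S.F where
  isSymm := S.symm
  nonpos u hu := S.hodge u <| by
    refine Submodule.span_mono ?_ hu
    rintro _ ⟨φ, hφ, ψ, hψ, rfl⟩
    exact .inl ⟨φ, hφ, ψ, hψ, rfl⟩

theorem MA_measure_continuity_general (m : ℕ) :
    ∃ C : ℝ, 0 < C ∧
      ∀ (W : Type*) [AddCommGroup W] [Module ℝ W]
        (B : MultilinearMap ℝ (fun _ : Fin (m + 2) => W) ℝ) (F : Set W), IsHodgeOn B F →
        ∀ φref ∈ F, ∀ φ₁ ∈ F, ∀ φ₂ ∈ F, ∀ ψ₁ ∈ F, ∀ ψ₂ ∈ F,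
          B (Fin.cons (ψ₁ - ψ₂) fun _ => φ₁) - B (Fin.cons (ψ₁ - ψ₂) fun _ => φ₂) ≤
            C * aubinI B ψ₁ ψ₂ ^ ((1 : ℝ) / 2 ^ (m + 1)) *
              aubinI B φ₁ φ₂ ^ ((1 : ℝ) / 2 ^ (m + 1)) *
              (max (max (aubinJ B φref φ₁) (aubinJ B φref φ₂))
                  (max (aubinJ B φref ψ₁) (aubinJ B φref ψ₂))) ^
                (1 - (1 : ℝ) / 2 ^ m) := by
  let K : ℝ := 36 ^ 2 ^ m * (m + 2)
  have hK : 0 < K := by positivity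
  refine ⟨(m + 1) * 9 * K ^ (1 - (1 : ℝ) / 2 ^ m), by positivity, ?_⟩
  intro W _ _ B F hB r hr φ₁ hφ₁ φ₂ hφ₂ ψ₁ hψ₁ ψ₂ hψ₂
  set M := max (max (aubinJ B r φ₁) (aubinJ B r φ₂)) (max (aubinJ B r ψ₁) (aubinJ B r ψ₂)) with hM
  let T : Set W := {φ ∈ F | aubinI B φ r ≤ (m + 2) * M}
  have hT : IsHodgeOn B T := hB.mono (Set.sep_subset _ _)
  have hmemT {φ : W} (hφ : φ ∈ F) (hJ : aubinJ B r φ ≤ M) : φ ∈ T :=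
    ⟨hφ, (hB.aubinI_le_mul_aubinJ hφ hr).trans (by gcongr)⟩
  have hφ₁T := hmemT hφ₁ (by simp [hM])
  have hM0 : 0 ≤ (m + 2) * M := (hB.aubinI_nonneg hφ₁ hr).trans hφ₁T.2
  have hrT : r ∈ T := ⟨hr, by simpa [aubinI] using hM0⟩
  have hQ : DirichletBoundOn B T (K * M) := by
    simpa only [K, mul_assoc] using hT.dirichletBoundOn hrT fun φ hφ => hφ.2
  refine (hT.map_cons_sub_map_cons_le hQ (hmemT hψ₁ (by simp [hM])) (hmemT hψ₂ (by simp [hM]))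
    hφ₁T (hmemT hφ₂ (by simp [hM]))).trans_eq ?_
  rw [Real.mul_rpow hK.le (nonneg_of_mul_nonneg_right hM0 (by positivity))]
  ring

/-- there is `C > 0` depending only on `n = m + 1` such that for
every setup, reference `φ_ref ∈ F`, and all `φ₁, φ₂, ψ₁, ψ₂ ∈ F`:
`B(ψ₁-ψ₂, φ₁,…,φ₁) - B(ψ₁-ψ₂, φ₂,…,φ₂) ≤
  C I(ψ₁,ψ₂)^{1/2ⁿ} I(φ₁,φ₂)^{1/2ⁿ} M^{1-1/2^{n-1}}` where
`M = max{J(φ₁), J(φ₂), J(ψ₁), J(ψ₂)}`. -/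
theorem MA_measure_continuity (m : ℕ) :
    ∃ C : ℝ, 0 < C ∧
      ∀ (W : Type*) [AddCommGroup W] [Module ℝ W] (S : MASetup m W),
        ∀ φref ∈ S.F, ∀ φ₁ ∈ S.F, ∀ φ₂ ∈ S.F, ∀ ψ₁ ∈ S.F, ∀ ψ₂ ∈ S.F,
          S.B (Fin.cons (ψ₁ - ψ₂) fun _ => φ₁) -
              S.B (Fin.cons (ψ₁ - ψ₂) fun _ => φ₂) ≤
            C * S.Ifun ψ₁ ψ₂ ^ ((1 : ℝ) / 2 ^ (m + 1)) *
              S.Ifun φ₁ φ₂ ^ ((1 : ℝ) / 2 ^ (m + 1)) *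
              (max (max (S.Jfun φref φ₁) (S.Jfun φref φ₂))
                  (max (S.Jfun φref ψ₁) (S.Jfun φref ψ₂))) ^
                (1 - (1 : ℝ) / 2 ^ m) := by
  obtain ⟨C, hC, hbound⟩ := MA_measure_continuity_general m
  exact ⟨C, hC, fun W _ _ S => hbound W S.B S.F S.isHodgeOn⟩
end

section
/- For all φ, ψ ∈ F and all t ∈ [0,1], one has J_ψ(t·φ + (1−t)·ψ) ≤ t^{1 + 1/n} · J_ψ(φ). -/
open Finset

/-!
Put `u = φ - ψ` and `φₜ = ψ + t u`. The energy telescopes,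
`(n+1) E(φ, ψ) = B(φ, …, φ) - B(ψ, …, ψ)`, so
`d/dt J_ψ(φₜ) = B(u, ψ, …, ψ) - B(u, φₜ, …, φₜ) = t⁻¹ I(φₜ, ψ)`. The index inequality makes
`B(u, φ, …, φ, ψ, …, ψ)` decrease with the number of copies of `φ`, which gives
`(1 + 1/n) J_ψ(φ) ≤ I(φ, ψ)`. Hence `t d/dt J_ψ(φₜ) ≥ (1 + 1/n) J_ψ(φₜ)`, that is,
`t ↦ J_ψ(φₜ) / t ^ (1 + 1/n)` is monotone on `(0, 1]`.
-/

theorem monotoneOn_div_rpow_of_mul_le_mul_deriv {D : Set ℝ} (hD : Convex ℝ D)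
    (hpos : D ⊆ Set.Ioi 0) {f f' : ℝ → ℝ} {α : ℝ} (hf : ∀ s ∈ D, HasDerivAt f (f' s) s)
    (hle : ∀ s ∈ D, α * f s ≤ s * f' s) :
    MonotoneOn (fun s => f s / s ^ α) D := by
  have hderiv : ∀ s ∈ D, HasDerivAt (fun s => f s / s ^ α)
      ((f' s * s ^ α - f s * (α * s ^ (α - 1))) / (s ^ α) ^ 2) s := fun s hs =>
    (hf s hs).div (Real.hasDerivAt_rpow_const (Or.inl (hpos hs).ne'))
      (Real.rpow_pos_of_pos (hpos hs) α).ne'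
  refine monotoneOn_of_deriv_nonneg hD
    (fun s hs => (hderiv s hs).continuousAt.continuousWithinAt)
    (fun s hs => (hderiv s (interior_subset hs)).differentiableAt.differentiableWithinAt)
    fun s hs => ?_
  have hsD := interior_subset hs
  have hs0 : 0 < s := hpos hsD
  have hnum : f' s * s ^ α - f s * (α * s ^ (α - 1)) =
      s ^ (α - 1) * (s * f' s - α * f s) := by
    rw [Real.rpow_sub_one hs0.ne']
    field_simp
  rw [(hderiv s hsD).deriv, hnum]
  have := sub_nonneg.2 (hle s hsD)
  positivity

section Line

variable {𝕜 ι E : Type*} {M : ι → Type*} [Fintype ι] [DecidableEq ι] [∀ i, AddCommGroup (M i)]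

theorem multilinearMap_apply_add_smul [CommRing 𝕜] [∀ i, Module 𝕜 (M i)] [AddCommGroup E]
    [Module 𝕜 E] (f : MultilinearMap 𝕜 M E) (x h : ∀ i, M i) (s : 𝕜) :
    f (x + s • h) =
      f x + s • f.linearDeriv x h + ∑ A with 2 ≤ #A, s ^ #A • f (A.piecewise h x) := by
  rw [f.map_add_eq_map_add_linearDeriv_add, map_smul]
  congr 1
  refine sum_congr rfl fun A _ => ?_
  rw [← prod_const, ← f.map_piecewise_smul]
  congr 1
  ext i
  by_cases hi : i ∈ A <;> simp [hi]

theorem hasDerivAt_multilinearMap_add_smul [NontriviallyNormedField 𝕜] [∀ i, Module 𝕜 (M i)]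
    [NormedAddCommGroup E] [NormedSpace 𝕜 E] (f : MultilinearMap 𝕜 M E) (x h : ∀ i, M i) (t : 𝕜) :
    HasDerivAt (fun s : 𝕜 => f (x + s • h)) (f.linearDeriv (x + t • h) h) t := by
  have at_zero : ∀ y : ∀ i, M i,
      HasDerivAt (fun s : 𝕜 => f (y + s • h)) (f.linearDeriv y h) 0 := by
    intro y
    have higher : ∀ A ∈ ({A | 2 ≤ #A} : Finset (Finset ι)),
        HasDerivAt (fun s : 𝕜 => s ^ #A • f (A.piecewise h y)) 0 0 := by
      intro A hA
      have hcard : #A - 1 ≠ 0 := by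
        have := (mem_filter.1 hA).2
        omega
      simpa [hcard] using (hasDerivAt_pow #A (0 : 𝕜)).smul_const (f (A.piecewise h y))
    simp only [multilinearMap_apply_add_smul f y]
    simpa using (((hasDerivAt_id (0 : 𝕜)).smul_const (f.linearDeriv y h)).const_add (f y)).fun_add
      (HasDerivAt.fun_sum higher)
  have shift : (fun s : 𝕜 => f (x + s • h)) = fun s => f (x + t • h + (s - t) • h) := by
    funext s
    congr 1
    module
  rw [shift]
  exact HasDerivAt.comp_sub_const t t (by simpa only [sub_self] using at_zero (x + t • h))

end Line

namespace MASetup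

variable {W : Type*} {n : ℕ}

theorem mixVec_zero (φ ψ : W) : (mixVec φ ψ 0 : Fin n → W) = fun _ => ψ :=
  funext fun i => if_neg (i : ℕ).not_lt_zero

theorem mixVec_of_le (φ ψ : W) {j : ℕ} (hj : n ≤ j) : (mixVec φ ψ j : Fin n → W) = fun _ => φ :=
  funext fun i => if_pos (i.is_lt.trans_le hj)

theorem mixVec_succ (φ ψ : W) (j : ℕ) :
    (mixVec φ ψ (j + 1) : Fin (n + 1) → W) = Fin.cons φ (mixVec φ ψ j) := by
  funext i
  cases i using Fin.cases <;> simp [mixVec]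

theorem mixVec_eq_insertNth (φ ψ : W) (j : Fin (n + 1)) :
    (mixVec φ ψ j : Fin (n + 1) → W) = j.insertNth (α := fun _ => W) ψ (mixVec φ ψ j) := by
  refine (Fin.insertNth_eq_iff.2 ⟨by simp [mixVec], funext fun i => ?_⟩).symm
  simp only [mixVec, Fin.removeNth, Fin.succAbove, Fin.lt_def]
  grind

theorem mixVec_mem {K : Set W} {φ ψ : W} (hφ : φ ∈ K) (hψ : ψ ∈ K) (j : ℕ) (i : Fin n) :
    mixVec φ ψ j i ∈ K := by
  unfold mixVec
  split_ifs <;> assumption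

end MASetup

open MASetup

/-- Invariance of a multilinear map under permutations of its arguments. -/
def IsSymmetricForm {R ι M N : Type*} [Semiring R] [AddCommMonoid M] [Module R M]
    [AddCommMonoid N] [Module R N] (B : MultilinearMap R (fun _ : ι => M) N) : Prop :=
  ∀ (v : ι → M) (σ : Equiv.Perm ι), B (v ∘ σ) = B v

namespace IsSymmetricForm

section Semiring

variable {R M N : Type*} [CommSemiring R] [AddCommMonoid M] [Module R M] [AddCommMonoid N]
  [Module R N] {n : ℕ} {B : MultilinearMap R (fun _ : Fin (n + 1) => M) N}

theorem curryLeft (hB : IsSymmetricForm B) (w : M) : IsSymmetricForm (B.curryLeft w) := by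
  intro v σ
  have hcons : (Fin.cons w v : Fin (n + 1) → M) ∘ Equiv.Perm.decomposeFin.symm (0, σ) =
      Fin.cons w (v ∘ σ) := by
    funext i
    cases i using Fin.cases <;> simp [Equiv.Perm.decomposeFin_symm_apply_succ]
  rw [B.curryLeft_apply, B.curryLeft_apply, ← hcons, hB]

theorem apply_insertNth (hB : IsSymmetricForm B) (p : Fin (n + 1)) (w : M) (v : Fin n → M) :
    B (p.insertNth (α := fun _ => M) w v) = B (Fin.cons w v) := by
  rw [← Fin.cons_comp_cycleRange, hB]

theorem linearDeriv_const (hB : IsSymmetricForm B) (x u : M) :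
    B.linearDeriv (fun _ => x) (fun _ => u) = (n + 1) • B (Fin.cons u fun _ => x) := by
  have hupdate : ∀ p : Fin (n + 1),
      B (Function.update (fun _ => x) p u) = B (Fin.cons u fun _ => x) := fun p => by
    rw [← Fin.insertNth_removeNth, hB.apply_insertNth]
    rfl
  simp [MultilinearMap.linearDeriv_apply, hupdate]

end Semiring

section Ring

variable {R M N : Type*} [CommRing R] [AddCommGroup M] [Module R M] [AddCommGroup N]
  [Module R N] {n : ℕ} {B : MultilinearMap R (fun _ : Fin (n + 1) => M) N}

theorem apply_cons_sub_mixVec (hB : IsSymmetricForm B) (φ ψ : M) {j : ℕ} (hj : j < n + 1) :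
    B (Fin.cons (φ - ψ) (mixVec φ ψ j)) = B (mixVec φ ψ (j + 1)) - B (mixVec φ ψ j) := by
  rw [mixVec_succ, mixVec_eq_insertNth φ ψ ⟨j, hj⟩, hB.apply_insertNth]
  exact congrArg (· (mixVec φ ψ j)) (map_sub B.curryLeft φ ψ)

theorem sum_apply_cons_sub_mixVec (hB : IsSymmetricForm B) (φ ψ : M) :
    ∑ j ∈ range (n + 1), B (Fin.cons (φ - ψ) (mixVec φ ψ j)) =
      B (fun _ => φ) - B fun _ => ψ := by
  rw [sum_congr rfl fun j hj => hB.apply_cons_sub_mixVec φ ψ (mem_range.1 hj),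
    sum_range_sub fun j => B (mixVec φ ψ j), mixVec_of_le φ ψ le_rfl, mixVec_zero]

end Ring

end IsSymmetricForm

section MongeAmpere

variable {W : Type*} [AddCommGroup W] [Module ℝ W] {n : ℕ}

/-- The Monge–Ampère energy `E(φ, ψ)` of a multilinear form in `n + 1` variables. -/
noncomputable def mongeAmpereEnergy (B : MultilinearMap ℝ (fun _ : Fin (n + 1) => W) ℝ)
    (φ ψ : W) : ℝ :=
  ((n : ℝ) + 1)⁻¹ * ∑ j ∈ range (n + 1), B (Fin.cons (φ - ψ) (mixVec φ ψ j))

/-- The functional `I(φ, ψ)` of a multilinear form in `n + 1` variables. -/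
def mongeAmpereI (B : MultilinearMap ℝ (fun _ : Fin (n + 1) => W) ℝ) (φ ψ : W) : ℝ :=
  B (Fin.cons (φ - ψ) fun _ => ψ) - B (Fin.cons (φ - ψ) fun _ => φ)

/-- The functional `J_ψ(φ)` of a multilinear form in `n + 1` variables, with the base
point `ψ` as first argument. -/
noncomputable def mongeAmpereJ (B : MultilinearMap ℝ (fun _ : Fin (n + 1) => W) ℝ)
    (ψ φ : W) : ℝ :=
  B (Fin.cons (φ - ψ) fun _ => ψ) - mongeAmpereEnergy B φ ψ

/-- The local Hodge index inequality for a form in `m + 2` variables, required only for differences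
of elements of `K`, with the remaining `m` arguments in `K`. -/
def HodgeIndexOn {m : ℕ} (B : MultilinearMap ℝ (fun _ : Fin (m + 2) => W) ℝ) (K : Set W) : Prop :=
  ∀ φ ∈ K, ∀ ψ ∈ K, ∀ g : Fin m → W, (∀ i, g i ∈ K) →
    B (Fin.cons (φ - ψ) (Fin.cons (φ - ψ) g)) ≤ 0

namespace IsSymmetricForm

variable {B : MultilinearMap ℝ (fun _ : Fin (n + 1) => W) ℝ}

theorem hasDerivAt_apply_const (hB : IsSymmetricForm B) (x u : W) (t : ℝ) :
    HasDerivAt (fun s : ℝ => B fun _ => x + s • u)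
      (((n : ℝ) + 1) * B (Fin.cons u fun _ => x + t • u)) t := by
  have hderiv := hasDerivAt_multilinearMap_add_smul B (fun _ => x) (fun _ => u) t
  exact hderiv.congr_deriv <|
    (hB.linearDeriv_const (x + t • u) u).trans (by rw [nsmul_eq_mul, Nat.cast_succ])

theorem mongeAmpereEnergy_eq (hB : IsSymmetricForm B) (φ ψ : W) :
    mongeAmpereEnergy B φ ψ = ((n : ℝ) + 1)⁻¹ * (B (fun _ => φ) - B fun _ => ψ) := by
  rw [mongeAmpereEnergy, hB.sum_apply_cons_sub_mixVec]

theorem hasDerivAt_mongeAmpereEnergy (hB : IsSymmetricForm B) (ψ u : W) (t : ℝ) :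
    HasDerivAt (fun s : ℝ => mongeAmpereEnergy B (ψ + s • u) ψ)
      (B (Fin.cons u fun _ => ψ + t • u)) t := by
  simp only [hB.mongeAmpereEnergy_eq]
  refine (((hB.hasDerivAt_apply_const ψ u t).sub_const _).const_mul _).congr_deriv ?_
  field_simp

theorem hasDerivAt_mongeAmpereJ (hB : IsSymmetricForm B) (ψ u : W) (t : ℝ) :
    HasDerivAt (fun s : ℝ => mongeAmpereJ B ψ (ψ + s • u))
      (B (Fin.cons u fun _ => ψ) - B (Fin.cons u fun _ => ψ + t • u)) t := by
  simp only [mongeAmpereJ, add_sub_cancel_left, MultilinearMap.cons_smul, smul_eq_mul]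
  exact (hasDerivAt_mul_const _).sub (hB.hasDerivAt_mongeAmpereEnergy ψ u t)

end IsSymmetricForm

theorem mongeAmpereI_add_smul (B : MultilinearMap ℝ (fun _ : Fin (n + 1) => W) ℝ) (ψ u : W)
    (t : ℝ) :
    mongeAmpereI B (ψ + t • u) ψ =
      t * (B (Fin.cons u fun _ => ψ) - B (Fin.cons u fun _ => ψ + t • u)) := by
  simp only [mongeAmpereI, add_sub_cancel_left, MultilinearMap.cons_smul, smul_eq_mul, mul_sub]

theorem mongeAmpereJ_self (B : MultilinearMap ℝ (fun _ : Fin (n + 1) => W) ℝ) (ψ : W) :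
    mongeAmpereJ B ψ ψ = 0 := by
  have hzero : ∀ v : Fin n → W, B (Fin.cons 0 v) = 0 := fun v => B.map_coord_zero 0 rfl
  simp [mongeAmpereJ, mongeAmpereEnergy, hzero]

namespace HodgeIndexOn

variable {m : ℕ} {B : MultilinearMap ℝ (fun _ : Fin (m + 2) => W) ℝ} {K : Set W} {φ ψ : W}

theorem antitone_apply_cons_mixVec (h : HodgeIndexOn B K) (hB : IsSymmetricForm B)
    (hφ : φ ∈ K) (hψ : ψ ∈ K) : Antitone fun j => B (Fin.cons (φ - ψ) (mixVec φ ψ j)) := by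
  refine antitone_nat_of_succ_le fun j => ?_
  rcases lt_or_ge j (m + 1) with hj | hj
  · have hdiff := (hB.curryLeft (φ - ψ)).apply_cons_sub_mixVec φ ψ hj
    have hindex := h φ hφ ψ hψ (mixVec φ ψ j) (mixVec_mem hφ hψ j)
    exact sub_nonpos.1 (hdiff.symm.trans_le hindex)
  · rw [mixVec_of_le φ ψ hj, mixVec_of_le φ ψ (hj.trans j.le_succ)]

theorem mul_mongeAmpereJ_le_mongeAmpereI (h : HodgeIndexOn B K) (hB : IsSymmetricForm B)
    (hφ : φ ∈ K) (hψ : ψ ∈ K) :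
    (1 + 1 / ((m : ℝ) + 1)) * mongeAmpereJ B ψ φ ≤ mongeAmpereI B φ ψ := by
  set a : ℕ → ℝ := fun j => B (Fin.cons (φ - ψ) (mixVec φ ψ j)) with ha
  have hJ : ((m : ℝ) + 2) * mongeAmpereJ B ψ φ =
      ((m : ℝ) + 2) * a 0 - ∑ j ∈ range (m + 2), a j := by
    simp only [mongeAmpereJ, mongeAmpereEnergy, ha, mixVec_zero]
    push_cast
    field_simp
    ring
  have hI : mongeAmpereI B φ ψ = a 0 - a (m + 1) := by
    simp only [mongeAmpereI, ha, mixVec_zero, mixVec_of_le φ ψ le_rfl]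
  have hsum : ((m : ℝ) + 1) * a (m + 1) + a 0 ≤ ∑ j ∈ range (m + 2), a j := by
    rw [sum_range_succ']
    gcongr
    simpa using card_nsmul_le_sum (range (m + 1)) (fun j => a (j + 1)) (a (m + 1)) fun j hj =>
      h.antitone_apply_cons_mixVec hB hφ hψ (mem_range.1 hj)
  have hratio : 1 + 1 / ((m : ℝ) + 1) = ((m : ℝ) + 2) / ((m : ℝ) + 1) := by
    field_simp
    ring
  rw [hratio, div_mul_eq_mul_div, div_le_iff₀ (by positivity), hJ, hI]
  linarith

end HodgeIndexOn

end MongeAmpere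

theorem Jfun_segment_general {m : ℕ} {W : Type*} [AddCommGroup W] [Module ℝ W]
    {B : MultilinearMap ℝ (fun _ : Fin (m + 2) => W) ℝ} (hB : IsSymmetricForm B)
    {K : Set W} (hK : Convex ℝ K) (hodge : HodgeIndexOn B K) {φ ψ : W} (hφ : φ ∈ K) (hψ : ψ ∈ K)
    {t : ℝ} (ht : t ∈ Set.Icc (0 : ℝ) 1) :
    mongeAmpereJ B ψ (t • φ + (1 - t) • ψ) ≤
      t ^ ((1 : ℝ) + 1 / ((m : ℝ) + 1)) * mongeAmpereJ B ψ φ := by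
  have hα : (0 : ℝ) < 1 + 1 / ((m : ℝ) + 1) := by positivity
  rcases ht.1.eq_or_lt with rfl | ht0
  · rw [Real.zero_rpow hα.ne']
    simp [mongeAmpereJ_self]
  have hineq : ∀ s ∈ Set.Ioc (0 : ℝ) 1,
      (1 + 1 / ((m : ℝ) + 1)) * mongeAmpereJ B ψ (ψ + s • (φ - ψ)) ≤
        s * (B (Fin.cons (φ - ψ) fun _ => ψ) - B (Fin.cons (φ - ψ) fun _ => ψ + s • (φ - ψ))) := by
    intro s hs
    rw [← mongeAmpereI_add_smul]
    exact hodge.mul_mongeAmpereJ_le_mongeAmpereI hB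
      (hK.add_smul_sub_mem hψ hφ (Set.Ioc_subset_Icc_self hs)) hψ
  have hmono := monotoneOn_div_rpow_of_mul_le_mul_deriv (convex_Ioc 0 1) (fun s hs => hs.1)
    (fun s _ => hB.hasDerivAt_mongeAmpereJ ψ (φ - ψ) s) hineq
  have hle := hmono ⟨ht0, ht.2⟩ ⟨one_pos, le_rfl⟩ ht.2
  have hseg : t • φ + (1 - t) • ψ = ψ + t • (φ - ψ) := by module
  rw [hseg, ← div_le_iff₀' (Real.rpow_pos_of_pos ht0 _)]
  simpa using hle

namespace MASetup

variable {m : ℕ} {W : Type*} [AddCommGroup W] [Module ℝ W]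

theorem Jfun_eq_mongeAmpereJ (S : MASetup m W) (ψ φ : W) :
    S.Jfun ψ φ = mongeAmpereJ S.B ψ φ := by
  norm_num [Jfun, energy, mongeAmpereJ, mongeAmpereEnergy, add_assoc]

theorem hodgeIndexOn (S : MASetup m W) : HodgeIndexOn S.B S.F := fun φ hφ ψ hψ =>
  S.hodge (φ - ψ) (Submodule.subset_span (Or.inl ⟨φ, hφ, ψ, hψ, rfl⟩))

end MASetup

/-- `J_ψ(tφ + (1-t)ψ) ≤ t^{1+1/n} J_ψ(φ)` for `t ∈ [0,1]`,
with `n = m + 1`. -/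
theorem Jfun_segment (m : ℕ) {W : Type*} [AddCommGroup W] [Module ℝ W]
    (S : MASetup m W) {φ ψ : W} (hφ : φ ∈ S.F) (hψ : ψ ∈ S.F)
    {t : ℝ} (ht : t ∈ Set.Icc (0 : ℝ) 1) :
    S.Jfun ψ (t • φ + (1 - t) • ψ) ≤
      t ^ ((1 : ℝ) + 1 / ((m : ℝ) + 1)) * S.Jfun ψ φ := by
  rw [S.Jfun_eq_mongeAmpereJ, S.Jfun_eq_mongeAmpereJ]
  exact Jfun_segment_general S.symm S.Fconv S.hodgeIndexOn hφ hψ ht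
end
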